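/- arXiv:0807.2155 — 4 statements merged into one kernel-verified Lean document; each statement's English description precedes it below -/
import Mathlib

section
/- Fix a real number q with 0 < q < 1. For every integer n ≥ 0 and every Λ ∈ ℂ with Λ ≠ 0, the following Shintani–Casselman–Shalika-type identity of type A₁ holds: q^{n²/4} · Ψ̃(q^{−n/2}, Λ) = θ(Λ) · P̄_n(Λ) · ∏_{j=1}^∞ (1 − qʲ)^{−1}. (Theorem 3.3 of the paper in the rank-one case, equation (4.33).) -/
open scoped BigOperators
open Filter

noncomputable section

/-- Symmetric monomial `M_r(X) = X^r + X^{-r}` for `r ≥ 1`, `M_0 = 1`. -/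
def Msym (r : ℕ) (X : ℂ) : ℂ := if r = 0 then 1 else X ^ r + X⁻¹ ^ r

/-- Continuous q-Hermite Laurent polynomial (Macdonald polynomial of type A₁ at t = 0). -/
def PbarA1 (q : ℝ) (n : ℕ) (X : ℂ) : ℂ :=
  Msym n X + ∑ j ∈ Finset.Icc 1 (n / 2),
    (∏ i ∈ Finset.range j, (1 - (q : ℂ) ^ (n - i)) / (1 - (q : ℂ) ^ (i + 1))) *
      Msym (n - 2 * j) X

/-- Global q-Whittaker function of type A₁. -/
def whitA1 (q : ℝ) (X Λ : ℂ) : ℂ :=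
  ∑' n : ℕ, ((q ^ ((n : ℝ) ^ 2 / 4) : ℝ) : ℂ) * X ^ n * PbarA1 q n Λ /
    ∏ j ∈ Finset.Icc 1 n, (1 - (q : ℂ) ^ j)

/-- Theta function `θ(Λ) = ∑_{j ∈ ℤ} q^{j²/4} Λ^j`. -/
def thetaA1 (q : ℝ) (Λ : ℂ) : ℂ :=
  ∑' j : ℤ, ((q ^ ((j : ℝ) ^ 2 / 4) : ℝ) : ℂ) * Λ ^ j

/-- Rogers Laurent polynomial (symmetric Macdonald polynomial of type A₁). -/
def RogersA1 (q : ℝ) (t : ℂ) (n : ℕ) (X : ℂ) : ℂ :=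
  Msym n X + ∑ j ∈ Finset.Icc 1 (n / 2),
    (∏ i ∈ Finset.range j,
      ((1 - (q : ℂ) ^ (n - i)) * (1 - t * (q : ℂ) ^ i)) /
      ((1 - (q : ℂ) ^ (1 + i)) * (1 - t * (q : ℂ) ^ (n - i - 1)))) *
    Msym (n - 2 * j) X

/-- Global q,t-spherical function of type A₁, with `t = s²`. -/
def sphA1 (q s : ℝ) (X Λ : ℂ) : ℂ :=
  ∑' n : ℕ, (s : ℂ) ^ n * ((q ^ ((n : ℝ) ^ 2 / 4) : ℝ) : ℂ) *
    RogersA1 q ((s : ℂ) ^ 2) n X * RogersA1 q ((s : ℂ) ^ 2) n Λ *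
    ∏ i ∈ Finset.range n,
      ((1 - (s : ℂ) ^ 2 * (q : ℂ) ^ i) * (1 - (s : ℂ) ^ 2 * (q : ℂ) ^ (i + 1))) /
      ((1 - ((s : ℂ) ^ 2) ^ 2 * (q : ℂ) ^ i) * (1 - (q : ℂ) ^ (i + 1)))

/-- Macdonald truncated theta weight function of type A₁. -/
def muA1 (q : ℝ) (t : ℂ) (X : ℂ) : ℂ :=
  ∏' j : ℕ, ((1 - X ^ 2 * (q : ℂ) ^ j) * (1 - X⁻¹ ^ 2 * (q : ℂ) ^ (j + 1))) /
    ((1 - t * X ^ 2 * (q : ℂ) ^ j) * (1 - t * X⁻¹ ^ 2 * (q : ℂ) ^ (j + 1)))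

/-- The reciprocal q-factorial `1 / ((1 - z) ⋯ (1 - z ^ n))`. -/
def invQFactorial (z : ℂ) (n : ℕ) : ℂ := ∏ i ∈ Finset.range n, (1 - z ^ (i + 1))⁻¹

/-- The q-Hermite polynomial divided by the q-factorial, expanded in powers of `Λ`. -/
def qHermiteNormalized (z Λ : ℂ) (n : ℕ) : ℂ :=
  ∑ p ∈ Finset.HasAntidiagonal.antidiagonal n,
    invQFactorial z p.1 * Λ ^ p.1 * (invQFactorial z p.2 * Λ⁻¹ ^ p.2)

/-- The Gaussian `q ^ (s ^ 2 / 4)` as a complex number. -/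
def qGaussian (q s : ℝ) : ℂ := ((q ^ (s ^ 2 / 4) : ℝ) : ℂ)

lemma one_sub_pow_ne_zero {z : ℂ} (hz : ‖z‖ < 1) (n : ℕ) : 1 - z ^ (n + 1) ≠ 0 := by
  intro h
  have h1 : ‖z ^ (n + 1)‖ < 1 := by
    rw [norm_pow]; exact pow_lt_one₀ (norm_nonneg _) hz (by omega)
  rw [← sub_eq_zero.mp h] at h1
  simp at h1

lemma invQFactorial_succ {z : ℂ} (hz : ‖z‖ < 1) (n : ℕ) :
    (1 - z ^ (n + 1)) * invQFactorial z (n + 1) = invQFactorial z n := by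
  rw [invQFactorial, Finset.prod_range_succ, ← invQFactorial, mul_comm (invQFactorial z n),
    mul_inv_cancel_left₀ (one_sub_pow_ne_zero hz n)]

lemma invQFactorial_ne_zero {z : ℂ} (hz : ‖z‖ < 1) (n : ℕ) : invQFactorial z n ≠ 0 :=
  Finset.prod_ne_zero_iff.mpr fun i _ => inv_ne_zero (one_sub_pow_ne_zero hz i)

lemma multipliable_one_sub_pow_inv {z : ℂ} (hz : ‖z‖ < 1) :
    Multipliable fun j : ℕ => (1 - z ^ (j + 1))⁻¹ := by
  have hs : Summable fun j : ℕ => ‖z ^ (j + 1) / (1 - z ^ (j + 1))‖ := by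
    refine Summable.of_nonneg_of_le (fun _ => norm_nonneg _) (fun j => ?_)
      ((summable_geometric_of_lt_one (norm_nonneg z) hz).mul_right (1 - ‖z‖)⁻¹)
    have h1 : ‖z‖ ^ (j + 1) ≤ ‖z‖ := pow_le_of_le_one (norm_nonneg _) hz.le (by omega)
    have h2 : 1 - ‖z‖ ≤ ‖1 - z ^ (j + 1)‖ := by
      have := norm_sub_norm_le (1 : ℂ) (z ^ (j + 1))
      rw [norm_one, norm_pow] at this
      linarith
    have h3 : 0 < 1 - ‖z‖ := by linarith
    rw [norm_div, div_eq_mul_inv, norm_pow]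
    gcongr ?_ * ?_⁻¹
    exact pow_le_pow_of_le_one (norm_nonneg _) hz.le (by omega)
  refine (multipliable_one_add_of_summable hs).congr fun j => ?_
  have := one_sub_pow_ne_zero hz j
  field_simp
  ring

lemma tendsto_invQFactorial {z : ℂ} (hz : ‖z‖ < 1) :
    Tendsto (invQFactorial z) atTop (nhds (∏' j : ℕ, (1 - z ^ (j + 1))⁻¹)) :=
  (multipliable_one_sub_pow_inv hz).tendsto_prod_tprod_nat

lemma exists_norm_invQFactorial_le {z : ℂ} (hz : ‖z‖ < 1) :
    ∃ C : ℝ, 0 ≤ C ∧ ∀ n, ‖invQFactorial z n‖ ≤ C := by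
  obtain ⟨C, hC⟩ := (tendsto_invQFactorial hz).norm.bddAbove_range
  have h : ∀ n, ‖invQFactorial z n‖ ≤ C := fun n => hC ⟨n, rfl⟩
  exact ⟨C, (norm_nonneg _).trans (h 0), h⟩

/-- The `b`-th term of the Durfee rectangle series. -/
def durfeeTerm (z : ℂ) (j b : ℕ) : ℂ :=
  z ^ (b * (b + j)) * (invQFactorial z (b + j) * invQFactorial z b)

lemma norm_durfeeTerm_le {z : ℂ} (hz : ‖z‖ < 1) {C : ℝ} (hC : 0 ≤ C)
    (h : ∀ n, ‖invQFactorial z n‖ ≤ C) (j b : ℕ) : ‖durfeeTerm z j b‖ ≤ ‖z‖ ^ b * (C * C) := by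
  rw [durfeeTerm, norm_mul, norm_mul, norm_pow]
  have : ‖z‖ ^ (b * (b + j)) ≤ ‖z‖ ^ b :=
    pow_le_pow_of_le_one (norm_nonneg _) hz.le (by
      nlinarith [Nat.le_mul_self b, Nat.zero_le (b * j)])
  gcongr
  · exact h _
  · exact h _

lemma summable_durfeeTerm {z : ℂ} (hz : ‖z‖ < 1) (j : ℕ) : Summable (durfeeTerm z j) := by
  obtain ⟨C, hC, h⟩ := exists_norm_invQFactorial_le hz
  exact Summable.of_norm_bounded
    ((summable_geometric_of_lt_one (norm_nonneg z) hz).mul_right (C * C))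
    (norm_durfeeTerm_le hz hC h j)

lemma tendsto_tsum_durfeeTerm {z : ℂ} (hz : ‖z‖ < 1) :
    Tendsto (fun j => ∑' b, durfeeTerm z j b) atTop
      (nhds (∏' j : ℕ, (1 - z ^ (j + 1))⁻¹)) := by
  obtain ⟨C, hC, h⟩ := exists_norm_invQFactorial_le hz
  set P := ∏' j : ℕ, (1 - z ^ (j + 1))⁻¹
  have key : Tendsto (fun j => ∑' b, durfeeTerm z j b) atTop
      (nhds (∑' b : ℕ, if b = 0 then P else 0)) := by
    refine tendsto_tsum_of_dominated_convergence
      ((summable_geometric_of_lt_one (norm_nonneg z) hz).mul_right (C * C)) (fun b => ?_)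
      (Eventually.of_forall fun j b => norm_durfeeTerm_le hz hC h j b)
    rcases b with _ | b
    · have h0 : invQFactorial z 0 = 1 := Finset.prod_range_zero _
      simpa [durfeeTerm, h0] using tendsto_invQFactorial hz
    · have h0 : Tendsto (fun j : ℕ => ‖z‖ ^ j * (C * C)) atTop (nhds 0) := by
        simpa using (tendsto_pow_atTop_nhds_zero_of_lt_one (norm_nonneg z) hz).mul_const (C * C)
      rw [if_neg (by omega)]
      refine squeeze_zero_norm (fun j => ?_) h0
      rw [durfeeTerm, norm_mul, norm_mul, norm_pow]
      have : ‖z‖ ^ ((b + 1) * (b + 1 + j)) ≤ ‖z‖ ^ j :=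
        pow_le_pow_of_le_one (norm_nonneg _) hz.le (by
          nlinarith [Nat.zero_le (b * j), Nat.zero_le (b * b)])
      gcongr
      · exact h _
      · exact h _
  rwa [tsum_ite_eq] at key

lemma tsum_durfeeTerm_sub {z : ℂ} (hz : ‖z‖ < 1) (j : ℕ) :
    ∑' b, durfeeTerm z j b - ∑' b, durfeeTerm z (j + 1) b =
      z ^ (j + 1) * (∑' b, durfeeTerm z (j + 2) b - ∑' b, durfeeTerm z (j + 1) b) := by
  have s0 := (summable_durfeeTerm hz j).hasSum
  have s1 := (summable_durfeeTerm hz (j + 1)).hasSum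
  have s2 := (summable_durfeeTerm hz (j + 2)).hasSum
  have hshift : HasSum (fun b => z ^ (b * (b + j)) * (1 - z ^ b) *
      (invQFactorial z (b + j + 1) * invQFactorial z b))
      (z ^ (j + 1) * ∑' b, durfeeTerm z (j + 2) b) := by
    rw [← hasSum_nat_add_iff' 1]
    simp only [Finset.range_one, Finset.sum_singleton, pow_zero, sub_self, mul_zero, zero_mul,
      sub_zero]
    refine (s2.mul_left (z ^ (j + 1))).congr_fun fun b => ?_
    rw [durfeeTerm, ← invQFactorial_succ hz b]
    ring_nf
  refine ((s0.sub s1).unique ?_).trans (mul_sub _ _ _).symm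
  refine (hshift.sub (s1.mul_left (z ^ (j + 1)))).congr_fun fun b => ?_
  rw [durfeeTerm, durfeeTerm, ← invQFactorial_succ hz (b + j)]
  ring_nf

/-- Durfee rectangle identity. -/
lemma tsum_durfeeTerm {z : ℂ} (hz : ‖z‖ < 1) (j : ℕ) :
    ∑' b, durfeeTerm z j b = ∏' j : ℕ, (1 - z ^ (j + 1))⁻¹ := by
  set D : ℕ → ℂ := fun j => ∑' b, durfeeTerm z j b with hD
  have hlim : Tendsto D atTop _ := tendsto_tsum_durfeeTerm hz
  have hmono : Monotone fun j => ‖D j - D (j + 1)‖ := by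
    refine monotone_nat_of_le_succ fun j => ?_
    have h1 : D j - D (j + 1) = z ^ (j + 1) * (D (j + 2) - D (j + 1)) := tsum_durfeeTerm_sub hz j
    rw [h1, norm_mul, norm_sub_rev (D (j + 2)), norm_pow]
    exact mul_le_of_le_one_left (norm_nonneg _) (pow_le_one₀ (norm_nonneg _) hz.le)
  have hzero : Tendsto (fun j => ‖D j - D (j + 1)‖) atTop (nhds 0) := by
    simpa using (hlim.sub (hlim.comp (tendsto_add_atTop_nat 1))).norm
  have hconst : ∀ j, D (j + 1) = D j := fun j =>
    (sub_eq_zero.mp (norm_le_zero_iff.mp (hmono.ge_of_tendsto hzero j))).symm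
  have hconst' : ∀ k, D (k + j) = D j := fun k => by
    induction k with
    | zero => rw [zero_add]
    | succ k ih => rw [add_right_comm, hconst, ih]
  refine tendsto_nhds_unique (tendsto_const_nhds.congr fun k => (hconst' k).symm)
    (hlim.comp (tendsto_add_atTop_nat j))

lemma qHermiteNormalized_rec {z Λ : ℂ} (hz : ‖z‖ < 1) (hΛ : Λ ≠ 0) (m : ℕ) :
    (1 - z ^ (m + 2)) * qHermiteNormalized z Λ (m + 2) =
      (Λ + Λ⁻¹) * qHermiteNormalized z Λ (m + 1) - qHermiteNormalized z Λ m := by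
  set f : ℕ → ℂ := fun a => invQFactorial z a * Λ ^ a
  set g : ℕ → ℂ := fun a => invQFactorial z a * Λ⁻¹ ^ a
  have hf : ∀ a, (1 - z ^ (a + 1)) * f (a + 1) = Λ * f a := fun a => by
    simp only [f]; rw [← invQFactorial_succ hz a]; ring
  have hg : ∀ a, (1 - z ^ (a + 1)) * g (a + 1) = Λ⁻¹ * g a := fun a => by
    simp only [g]; rw [← invQFactorial_succ hz a]; ring
  have hu : ∀ n, ∑ p ∈ Finset.HasAntidiagonal.antidiagonal (n + 1),
      (1 - z ^ p.1) * f p.1 * g p.2 =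
      Λ * ∑ p ∈ Finset.HasAntidiagonal.antidiagonal n, f p.1 * g p.2 := fun n => by
    rw [Finset.Nat.sum_antidiagonal_succ, Finset.mul_sum]
    simp [hf, mul_assoc]
  have hv : ∀ n, ∑ p ∈ Finset.HasAntidiagonal.antidiagonal (n + 1),
      f p.1 * ((1 - z ^ p.2) * g p.2) =
      Λ⁻¹ * ∑ p ∈ Finset.HasAntidiagonal.antidiagonal n, f p.1 * g p.2 := fun n => by
    rw [Finset.Nat.sum_antidiagonal_succ', Finset.mul_sum]
    simp [hg, mul_left_comm]
  have huv : ∑ p ∈ Finset.HasAntidiagonal.antidiagonal (m + 2),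
      (1 - z ^ p.1) * f p.1 * ((1 - z ^ p.2) * g p.2) =
      ∑ p ∈ Finset.HasAntidiagonal.antidiagonal m, f p.1 * g p.2 := by
    rw [Finset.Nat.sum_antidiagonal_succ, Finset.Nat.sum_antidiagonal_succ']
    simp only [hf, hg, pow_zero, sub_self, zero_mul, mul_zero, zero_add]
    refine Finset.sum_congr rfl fun p _ => ?_
    field_simp
  change (1 - z ^ (m + 2)) * ∑ p ∈ Finset.HasAntidiagonal.antidiagonal (m + 2), f p.1 * g p.2 =
    (Λ + Λ⁻¹) * ∑ p ∈ Finset.HasAntidiagonal.antidiagonal (m + 1), f p.1 * g p.2 -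
      ∑ p ∈ Finset.HasAntidiagonal.antidiagonal m, f p.1 * g p.2
  rw [add_mul, ← hu, ← hv, ← huv, Finset.mul_sum, ← Finset.sum_add_distrib,
    ← Finset.sum_sub_distrib]
  refine Finset.sum_congr rfl fun p hp => ?_
  rw [← Finset.HasAntidiagonal.mem_antidiagonal.mp hp]
  ring

lemma qHermiteNormalized_zero (z Λ : ℂ) : qHermiteNormalized z Λ 0 = 1 := by
  simp [qHermiteNormalized, invQFactorial]

lemma qHermiteNormalized_one {z : ℂ} (hz : ‖z‖ < 1) (Λ : ℂ) :
    (1 - z) * qHermiteNormalized z Λ 1 = Λ + Λ⁻¹ := by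
  have h : 1 - z ≠ 0 := by simpa using one_sub_pow_ne_zero hz 0
  simp only [qHermiteNormalized, invQFactorial, Finset.Nat.sum_antidiagonal_succ,
    Finset.Nat.antidiagonal_zero, Finset.sum_singleton, Finset.prod_range_succ,
    Finset.prod_range_zero, zero_add, pow_zero, pow_one, one_mul, mul_one]
  rw [← mul_add, mul_inv_cancel_left₀ h, add_comm]

/-- Folding a sum over `0, …, n` around its midpoint. -/
lemma sum_range_eq_sum_fold (n : ℕ) (f : ℕ → ℂ) :
    ∑ j ∈ Finset.range (n + 1), f j = ∑ j ∈ Finset.range (n / 2 + 1),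
      if n - 2 * j = 0 then f j else f j + f (n - j) := by
  induction n using Nat.twoStepInduction generalizing f with
  | zero => simp
  | one => simp [Finset.sum_range_succ]
  | more n ih _ =>
    rw [Finset.sum_range_succ, Finset.sum_range_succ', ih, show (n + 2) / 2 = n / 2 + 1 by omega,
      Finset.sum_range_succ' _ (n / 2 + 1), add_assoc]
    congr 1
    refine Finset.sum_congr rfl fun j hj => ?_
    have hj' : j ≤ n / 2 := by simpa [Nat.lt_succ_iff] using hj
    rw [show n + 2 - 2 * (j + 1) = n - 2 * j by omega,
      show n + 2 - (j + 1) = n - j + 1 by omega]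

lemma prod_qBinomial {z : ℂ} (hz : ‖z‖ < 1) {n j : ℕ} (hj : j ≤ n) :
    invQFactorial z n *
      ∏ i ∈ Finset.range j, (1 - z ^ (n - i)) / (1 - z ^ (i + 1)) =
      invQFactorial z j * invQFactorial z (n - j) := by
  induction j with
  | zero => simp [invQFactorial]
  | succ j ih =>
    rw [Finset.prod_range_succ, ← mul_assoc, ih (by omega), ← invQFactorial_succ hz j,
      show n - j = (n - (j + 1)) + 1 by omega, ← invQFactorial_succ hz (n - (j + 1))]
    have := one_sub_pow_ne_zero hz j
    field_simp

lemma invQFactorial_mul_PbarA1 {q : ℝ} (hz : ‖(q : ℂ)‖ < 1) {Λ : ℂ} (hΛ : Λ ≠ 0) (n : ℕ) :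
    invQFactorial q n * PbarA1 q n Λ = qHermiteNormalized q Λ n := by
  have hP : PbarA1 q n Λ = ∑ j ∈ Finset.range (n / 2 + 1),
      (∏ i ∈ Finset.range j, (1 - (q : ℂ) ^ (n - i)) / (1 - (q : ℂ) ^ (i + 1))) *
        Msym (n - 2 * j) Λ := by
    rw [Finset.range_eq_Ico, Finset.sum_eq_sum_Ico_succ_bot (by omega)]
    simp only [PbarA1, Finset.range_zero, Finset.prod_empty, one_mul, mul_zero, Nat.sub_zero]
    rfl
  rw [hP, Finset.mul_sum, qHermiteNormalized, Finset.Nat.sum_antidiagonal_eq_sum_range_succ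
    (fun a b => invQFactorial q a * Λ ^ a * (invQFactorial q b * Λ⁻¹ ^ b)), Nat.succ_eq_add_one,
    sum_range_eq_sum_fold n]
  refine Finset.sum_congr rfl fun j hj => ?_
  have hj' : 2 * j ≤ n := by
    have : j < n / 2 + 1 := by simpa using hj
    omega
  rw [← mul_assoc, prod_qBinomial hz (by omega), Msym]
  have e1 : n - j = j + (n - 2 * j) := by omega
  have e2 : n - (n - j) = j := by omega
  have e3 : Λ ^ j * Λ⁻¹ ^ j = 1 := by rw [← mul_pow, mul_inv_cancel₀ hΛ, one_pow]
  split_ifs with h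
  · rw [show n - j = j by omega]
    linear_combination (-invQFactorial q j * invQFactorial q j) * e3
  · rw [e2, e1, pow_add, pow_add]
    linear_combination (-invQFactorial q j * invQFactorial q (j + (n - 2 * j)) *
      (Λ ^ (n - 2 * j) + Λ⁻¹ ^ (n - 2 * j))) * e3

lemma PbarA1_zero (q : ℝ) (Λ : ℂ) : PbarA1 q 0 Λ = 1 := by simp [PbarA1, Msym]

lemma PbarA1_one (q : ℝ) (Λ : ℂ) : PbarA1 q 1 Λ = Λ + Λ⁻¹ := by simp [PbarA1, Msym]

/-- The three-term recurrence of the continuous q-Hermite polynomials. -/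
lemma PbarA1_rec {q : ℝ} (hz : ‖(q : ℂ)‖ < 1) {Λ : ℂ} (hΛ : Λ ≠ 0) (n : ℕ) :
    PbarA1 q (n + 2) Λ =
      (Λ + Λ⁻¹) * PbarA1 q (n + 1) Λ - (1 - (q : ℂ) ^ (n + 1)) * PbarA1 q n Λ := by
  have h := qHermiteNormalized_rec hz hΛ n
  simp only [← invQFactorial_mul_PbarA1 hz hΛ] at h
  rw [← mul_assoc, invQFactorial_succ hz (n + 1), ← invQFactorial_succ hz n] at h
  exact mul_left_cancel₀ (invQFactorial_ne_zero hz (n + 1)) (by linear_combination h)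

lemma summable_qGaussian_mul_pow {q : ℝ} (hq0 : 0 < q) (hq1 : q < 1) (t : ℝ) {A : ℝ}
    (hA : 0 < A) : Summable fun m : ℕ => q ^ (((m : ℝ) - t) ^ 2 / 4) * A ^ m := by
  refine summable_of_ratio_test_tendsto_lt_one (l := 0) one_pos
    (Eventually.of_forall fun m => by positivity) ?_
  have h1 : Tendsto (fun m : ℕ => (2 * ((m : ℝ) - t) + 1) / 4) atTop atTop := by
    refine Tendsto.atTop_div_const (by norm_num) (tendsto_atTop_add_const_right _ _ ?_)
    exact (tendsto_atTop_add_const_right _ (-t) tendsto_natCast_atTop_atTop).const_mul_atTop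
      two_pos
  have h2 : Tendsto (fun m : ℕ => q ^ ((2 * ((m : ℝ) - t) + 1) / 4) * A) atTop (nhds 0) := by
    simpa using ((tendsto_rpow_atTop_of_base_lt_one q (by linarith) hq1).comp h1).mul_const A
  refine h2.congr fun m => ?_
  rw [Real.norm_of_nonneg (by positivity), Real.norm_of_nonneg (by positivity),
    eq_div_iff (by positivity), pow_succ A m]
  have : q ^ ((((m + 1 : ℕ) : ℝ) - t) ^ 2 / 4) =
      q ^ ((2 * ((m : ℝ) - t) + 1) / 4) * q ^ (((m : ℝ) - t) ^ 2 / 4) := by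
    rw [← Real.rpow_add hq0]
    congr 1
    push_cast
    ring
  rw [this, mul_mul_mul_comm, mul_comm A]

lemma norm_qGaussian {q : ℝ} (hq0 : 0 < q) (s : ℝ) : ‖qGaussian q s‖ = q ^ (s ^ 2 / 4) := by
  rw [qGaussian, Complex.norm_real, Real.norm_of_nonneg (by positivity)]

lemma summable_theta_norm {q : ℝ} (hq0 : 0 < q) (hq1 : q < 1) {Λ : ℂ} (hΛ : Λ ≠ 0) :
    Summable fun j : ℤ => ‖qGaussian q j * Λ ^ j‖ := by
  simp only [norm_mul, norm_qGaussian hq0, norm_zpow]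
  apply Summable.of_nat_of_neg
  · simpa using summable_qGaussian_mul_pow hq0 hq1 0 (norm_pos_iff.mpr hΛ)
  · simpa using summable_qGaussian_mul_pow hq0 hq1 0 (inv_pos.mpr (norm_pos_iff.mpr hΛ))

lemma summable_qGaussian_mul_qHermiteNormalized {q : ℝ} (hq0 : 0 < q) (hq1 : q < 1)
    (hz : ‖(q : ℂ)‖ < 1) (Λ : ℂ) (t : ℝ) :
    Summable fun m : ℕ => qGaussian q (m - t) * qHermiteNormalized q Λ m := by
  obtain ⟨C, hC, h⟩ := exists_norm_invQFactorial_le hz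
  set L := ‖Λ‖ + ‖Λ⁻¹‖ + 1
  have hL : 0 < L := by positivity
  have hbound : ∀ m, ‖qHermiteNormalized q Λ m‖ ≤ (2 * L) ^ m * (C * C) := fun m => by
    have hterm : ∀ p ∈ Finset.HasAntidiagonal.antidiagonal m,
        ‖invQFactorial q p.1 * Λ ^ p.1 * (invQFactorial q p.2 * Λ⁻¹ ^ p.2)‖ ≤
          L ^ m * (C * C) := fun p hp => by
      rw [← Finset.HasAntidiagonal.mem_antidiagonal.mp hp, pow_add, norm_mul, norm_mul, norm_mul,
        norm_pow, norm_pow]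
      have h1 : ‖Λ‖ ≤ L := by simp only [L]; linarith [norm_nonneg Λ⁻¹]
      have h2 : ‖Λ⁻¹‖ ≤ L := by simp only [L]; linarith [norm_nonneg Λ]
      calc _ ≤ C * L ^ p.1 * (C * L ^ p.2) := by
            gcongr
            · exact h _
            · exact h _
        _ = _ := by ring
    refine (norm_sum_le_of_le _ hterm).trans ?_
    rw [Finset.sum_const, Finset.Nat.card_antidiagonal, nsmul_eq_mul, mul_pow, mul_assoc]
    gcongr
    exact_mod_cast Nat.lt_two_pow_self (n := m)
  refine Summable.of_norm_bounded
    ((summable_qGaussian_mul_pow hq0 hq1 t (A := 2 * L) (by positivity)).mul_right (C * C))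
    fun m => ?_
  rw [norm_mul, norm_qGaussian hq0, mul_assoc]
  gcongr
  exact hbound m

/-- The Gaussian-weighted generating function of q-Hermite polynomials, centred at `t`. -/
def qHermiteGaussianSum (q : ℝ) (Λ : ℂ) (t : ℝ) : ℂ :=
  ∑' m : ℕ, qGaussian q (m - t) * qHermiteNormalized q Λ m

lemma qGaussian_sub_one {q : ℝ} (hq0 : 0 < q) (s t : ℝ) (m : ℕ) (hs : s = m - t) :
    qGaussian q (s - 1) * (q : ℂ) ^ m = ((q ^ t : ℝ) : ℂ) * qGaussian q (s + 1) := by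
  rw [qGaussian, qGaussian, ← Complex.ofReal_pow, ← Complex.ofReal_mul, ← Complex.ofReal_mul,
    ← Real.rpow_natCast q m, ← Real.rpow_add hq0, ← Real.rpow_add hq0]
  congr 2
  rw [hs]
  ring

lemma qHermiteGaussianSum_rec {q : ℝ} (hq0 : 0 < q) (hq1 : q < 1) (hz : ‖(q : ℂ)‖ < 1)
    {Λ : ℂ} (hΛ : Λ ≠ 0) (t : ℝ) :
    (Λ + Λ⁻¹) * qHermiteGaussianSum q Λ t = qHermiteGaussianSum q Λ (t + 1) +
      (1 - ((q ^ t : ℝ) : ℂ)) * qHermiteGaussianSum q Λ (t - 1) := by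
  have hs : ∀ t, HasSum (fun m : ℕ => qGaussian q (m - t) * qHermiteNormalized q Λ m)
      (qHermiteGaussianSum q Λ t) := fun t =>
    (summable_qGaussian_mul_qHermiteNormalized hq0 hq1 hz Λ t).hasSum
  have hup : HasSum (fun m : ℕ => qGaussian q (m - t) *
      ((1 - (q : ℂ) ^ (m + 1)) * qHermiteNormalized q Λ (m + 1)))
      (qHermiteGaussianSum q Λ (t + 1) -
        ((q ^ t : ℝ) : ℂ) * qHermiteGaussianSum q Λ (t - 1)) := by
    have h := (hs (t + 1)).sub ((hs (t - 1)).mul_left ((q ^ t : ℝ) : ℂ))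
    have hterm : ∀ m : ℕ, qGaussian q (m - (t + 1)) * qHermiteNormalized q Λ m -
        ((q ^ t : ℝ) : ℂ) * (qGaussian q (m - (t - 1)) * qHermiteNormalized q Λ m) =
        qGaussian q (m - (t + 1)) * ((1 - (q : ℂ) ^ m) * qHermiteNormalized q Λ m) := fun m => by
      have := qGaussian_sub_one hq0 _ t m rfl
      rw [show (m : ℝ) - (t + 1) = m - t - 1 by ring, show (m : ℝ) - (t - 1) = m - t + 1 by ring]
      linear_combination qHermiteNormalized q Λ m * this
    simp only [hterm] at h
    rw [← hasSum_nat_add_iff' 1] at h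
    simpa using h
  have hdown : HasSum (fun m : ℕ => qGaussian q (m - t) *
      (if m = 0 then 0 else qHermiteNormalized q Λ (m - 1)))
      (qHermiteGaussianSum q Λ (t - 1)) := by
    rw [← hasSum_nat_add_iff' 1]
    have hcast : ∀ m : ℕ, ((m + 1 : ℕ) : ℝ) - t = m - (t - 1) := fun m => by push_cast; ring
    simpa [hcast, -Nat.cast_add] using hs (t - 1)
  have heq : ∀ m : ℕ, (Λ + Λ⁻¹) * qHermiteNormalized q Λ m =
      (1 - (q : ℂ) ^ (m + 1)) * qHermiteNormalized q Λ (m + 1) +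
        if m = 0 then 0 else qHermiteNormalized q Λ (m - 1) := fun m => by
    rcases m with _ | m
    · simp [qHermiteNormalized_zero, qHermiteNormalized_one hz]
    · rw [if_neg (by omega), qHermiteNormalized_rec hz hΛ]
      simp
  have h := (hs t).mul_left (Λ + Λ⁻¹)
  simp only [mul_left_comm (Λ + Λ⁻¹), heq, mul_add] at h
  rw [h.unique (hup.add hdown)]
  ring

/-- Pairs of naturals, parametrized by difference and minimum. -/
def intProdNatEquivNatProd : ℤ × ℕ ≃ ℕ × ℕ where
  toFun x := (x.1.toNat + x.2, (-x.1).toNat + x.2)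
  invFun p := ((p.1 : ℤ) - p.2, min p.1 p.2)
  left_inv x := Prod.ext (by simp) (by simp; omega)
  right_inv p := Prod.ext (by simp) (by simp; omega)

lemma doubleSum_term {q : ℝ} (hq0 : 0 < q) {Λ : ℂ} (hΛ : Λ ≠ 0) (j : ℤ) (k : ℕ) :
    qGaussian q (((j.toNat + k : ℕ) : ℝ) + ((-j).toNat + k : ℕ)) *
      (invQFactorial q (j.toNat + k) * Λ ^ (j.toNat + k) *
        (invQFactorial q ((-j).toNat + k) * Λ⁻¹ ^ ((-j).toNat + k))) =
      qGaussian q j * Λ ^ j * durfeeTerm q j.natAbs k := by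
  have hpow : Λ ^ j = Λ ^ (j.toNat + k) * Λ⁻¹ ^ ((-j).toNat + k) := by
    rw [inv_pow, ← zpow_natCast, ← zpow_natCast, ← zpow_neg, ← zpow_add₀ hΛ]
    congr 1
    push_cast
    omega
  have hgauss : ∀ a b : ℕ, qGaussian q ((a : ℝ) + b) =
      qGaussian q (a - b) * (q : ℂ) ^ (a * b) := fun a b => by
    rw [qGaussian, qGaussian, ← Complex.ofReal_pow, ← Complex.ofReal_mul,
      ← Real.rpow_natCast q (a * b), ← Real.rpow_add hq0]
    congr 2
    push_cast
    ring
  have hcast : (((j.toNat + k : ℕ) : ℝ) - ((-j).toNat + k : ℕ)) = j := by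
    have : (((j.toNat + k : ℕ) : ℤ) - ((-j).toNat + k : ℕ)) = j := by push_cast; omega
    exact_mod_cast congrArg (Int.cast : ℤ → ℝ) this
  rw [hgauss, hcast, hpow, durfeeTerm]
  rcases le_total 0 j with h | h
  · rw [show (-j).toNat = 0 by omega, show j.toNat = j.natAbs by omega]
    ring_nf
  · rw [show j.toNat = 0 by omega, show (-j).toNat = j.natAbs by omega]
    ring_nf

lemma qHermiteGaussianSum_zero {q : ℝ} (hq0 : 0 < q) (hq1 : q < 1) (hz : ‖(q : ℂ)‖ < 1)
    {Λ : ℂ} (hΛ : Λ ≠ 0) :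
    qHermiteGaussianSum q Λ 0 = thetaA1 q Λ * ∏' j : ℕ, (1 - (q : ℂ) ^ (j + 1))⁻¹ := by
  set F : ℕ × ℕ → ℂ := fun p => qGaussian q ((p.1 : ℝ) + p.2) *
    (invQFactorial q p.1 * Λ ^ p.1 * (invQFactorial q p.2 * Λ⁻¹ ^ p.2)) with hF
  set G : ℤ × ℕ → ℂ := fun x => qGaussian q x.1 * Λ ^ x.1 * durfeeTerm q x.1.natAbs x.2 with hG
  have hFG : F ∘ intProdNatEquivNatProd = G := funext fun x => doubleSum_term hq0 hΛ x.1 x.2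
  have hGs : Summable G := by
    obtain ⟨C, hC, h⟩ := exists_norm_invQFactorial_le hz
    have hgeom := (summable_geometric_of_lt_one (norm_nonneg (q : ℂ)) hz).mul_right (C * C)
    refine Summable.of_norm_bounded ((summable_theta_norm hq0 hq1 hΛ).mul_of_nonneg hgeom
      (fun _ => norm_nonneg _) (fun _ => by positivity)) fun x => ?_
    rw [hG, norm_mul]
    gcongr
    exact norm_durfeeTerm_le hz hC h _ _
  have hFs : HasSum F (∑' x, G x) := by
    rw [← intProdNatEquivNatProd.hasSum_iff, hFG]
    exact hGs.hasSum
  have h1 : ∑' x, G x = thetaA1 q Λ * ∏' j : ℕ, (1 - (q : ℂ) ^ (j + 1))⁻¹ := by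
    have h := hGs.hasSum.prod_fiberwise fun j =>
      (summable_durfeeTerm hz j.natAbs).hasSum.mul_left (qGaussian q j * Λ ^ j)
    simp only [tsum_durfeeTerm hz] at h
    rw [← h.tsum_eq, tsum_mul_right]
    rfl
  rw [← h1]
  have h2 := (Finset.HasAntidiagonal.sigmaAntidiagonalEquivProd.hasSum_iff.mpr hFs).sigma
    fun m => hasSum_fintype _
  refine (HasSum.congr_fun h2 fun m => ?_).tsum_eq
  rw [qHermiteNormalized, Finset.mul_sum, ← Finset.sum_coe_sort]
  refine Finset.sum_congr rfl fun p _ => ?_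
  have hp : (p.1.1 : ℝ) + p.1.2 = m := by
    exact_mod_cast Finset.HasAntidiagonal.mem_antidiagonal.mp p.2
  simp [F, hp]

lemma qHermiteGaussianSum_natCast {q : ℝ} (hq0 : 0 < q) (hq1 : q < 1) (hz : ‖(q : ℂ)‖ < 1)
    {Λ : ℂ} (hΛ : Λ ≠ 0) (n : ℕ) :
    qHermiteGaussianSum q Λ n = PbarA1 q n Λ * qHermiteGaussianSum q Λ 0 := by
  induction n using Nat.twoStepInduction with
  | zero => simp [PbarA1_zero]
  | one =>
    have h := qHermiteGaussianSum_rec hq0 hq1 hz hΛ 0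
    simp only [zero_add, Real.rpow_zero, Complex.ofReal_one, sub_self, zero_mul, add_zero] at h
    rw [PbarA1_one, h, Nat.cast_one]
  | more n ih0 ih1 =>
    have h := qHermiteGaussianSum_rec hq0 hq1 hz hΛ ((n + 1 : ℕ) : ℝ)
    rw [Real.rpow_natCast, show ((n + 1 : ℕ) : ℝ) + 1 = ((n + 2 : ℕ) : ℝ) by push_cast; ring,
      show ((n + 1 : ℕ) : ℝ) - 1 = (n : ℝ) by push_cast; ring, ih0, ih1,
      Complex.ofReal_pow] at h
    rw [PbarA1_rec hz hΛ]
    linear_combination -h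

lemma qGaussian_mul_whitA1 {q : ℝ} (hq0 : 0 < q) (hz : ‖(q : ℂ)‖ < 1) {Λ : ℂ} (hΛ : Λ ≠ 0)
    (t : ℝ) :
    qGaussian q t * whitA1 q ((q ^ (-t / 2) : ℝ) : ℂ) Λ = qHermiteGaussianSum q Λ t := by
  rw [whitA1, qHermiteGaussianSum, ← tsum_mul_left]
  refine tsum_congr fun m => ?_
  have hprod : (∏ j ∈ Finset.Icc 1 m, (1 - (q : ℂ) ^ j))⁻¹ = invQFactorial q m := by
    rw [invQFactorial, Finset.prod_inv_distrib, Finset.range_eq_Ico,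
      Finset.prod_Ico_add' (fun j => 1 - (q : ℂ) ^ j) 0 m 1]
    rfl
  have hgauss : qGaussian q (m - t) =
      qGaussian q t * (qGaussian q m * ((q ^ (-t / 2) : ℝ) : ℂ) ^ m) := by
    simp only [qGaussian]
    rw [← Complex.ofReal_pow, ← Complex.ofReal_mul, ← Complex.ofReal_mul,
      ← Real.rpow_mul_natCast hq0.le, ← Real.rpow_add hq0, ← Real.rpow_add hq0]
    congr 2
    ring
  rw [hgauss, ← invQFactorial_mul_PbarA1 hz hΛ, ← hprod, qGaussian, qGaussian]
  ring

/-- the Shintani–Casselman–Shalika-type identity of type A₁. -/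
theorem shintani_A1 (q : ℝ) (hq0 : 0 < q) (hq1 : q < 1) (n : ℕ) (Λ : ℂ) (hΛ : Λ ≠ 0) :
    ((q ^ ((n : ℝ) ^ 2 / 4) : ℝ) : ℂ) *
      whitA1 q (((q ^ (-(n : ℝ) / 2) : ℝ) : ℂ)) Λ =
    thetaA1 q Λ * PbarA1 q n Λ * ∏' j : ℕ, (1 - (q : ℂ) ^ (j + 1))⁻¹ := by
  have hz : ‖(q : ℂ)‖ < 1 := by rwa [Complex.norm_real, Real.norm_of_nonneg hq0.le]
  have h := qGaussian_mul_whitA1 hq0 hz hΛ n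
  rw [qHermiteGaussianSum_natCast hq0 hq1 hz hΛ, qHermiteGaussianSum_zero hq0 hq1 hz hΛ] at h
  refine h.trans ?_
  ring

end
end

section
/- Fix real numbers q and s with 0 < q < 1 and 0 < s < 1 and set t = s². For every integer n ≥ 0, put Λ₀ = q^{−n/2} s^{−1}. Then for every X ∈ ℂ with X ≠ 0 the q,t-Shintani (evaluation) formula of type A₁ holds: θ(s) · Ψ_t(X, Λ₀) = θ(X) · θ(Λ₀) · ( P_n(X; q, t) / P_n(s; q, t) ) · ∏_{j=1}^∞ (1 − t qʲ)/(1 − qʲ). (Formula (3.33) of the paper in the rank-one case.) -/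
open scoped BigOperators
open Filter

noncomputable section

namespace QTShintani

open PowerSeries Finset

/-- The coefficient `(t;q)_i / (q;q)_i` of the `q`-binomial series. -/
def qbin (q t : ℂ) (i : ℕ) : ℂ :=
  ∏ j ∈ range i, (1 - t * q ^ j) / (1 - q ^ (j + 1))

lemma qbin_zero (q t : ℂ) : qbin q t 0 = 1 := by simp [qbin]

lemma qbin_succ {q : ℂ} (t : ℂ) (hq : ∀ i : ℕ, 1 - q ^ (i + 1) ≠ 0) (i : ℕ) :
    (1 - q ^ (i + 1)) * qbin q t (i + 1) = (1 - t * q ^ i) * qbin q t i := by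
  have := hq i
  rw [qbin, prod_range_succ, ← qbin]
  field_simp

/-- The Rogers polynomial in the normalization
`R_n(X) = ∑_{i+j=n} (t;q)_i (t;q)_j / ((q;q)_i (q;q)_j) X^{i-j}`. -/
def rogersR (q t : ℂ) (n : ℕ) (X : ℂ) : ℂ :=
  ∑ x ∈ antidiagonal n, qbin q t x.1 * qbin q t x.2 * (X ^ x.1 * X⁻¹ ^ x.2)

lemma rogersR_zero (q t X : ℂ) : rogersR q t 0 X = 1 := by simp [rogersR, qbin_zero]

lemma rogersR_inv (q t : ℂ) (n : ℕ) (X : ℂ) : rogersR q t n X⁻¹ = rogersR q t n X := by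
  unfold rogersR
  rw [← Finset.Nat.sum_antidiagonal_swap]
  refine sum_congr rfl fun x _ => ?_
  simp only [Prod.fst_swap, Prod.snd_swap, inv_inv]
  ring

/-- The `q`-binomial series `∑ (t;q)_i / (q;q)_i (a z)^i`. -/
def qbinSeries (q t a : ℂ) : PowerSeries ℂ := PowerSeries.mk fun i => qbin q t i * a ^ i

lemma qbinSeries_functional {q : ℂ} (t : ℂ) (hq : ∀ i : ℕ, 1 - q ^ (i + 1) ≠ 0) (a : ℂ) :
    (1 - C a * PowerSeries.X) * qbinSeries q t a =
      (1 - C (t * a) * PowerSeries.X) * qbinSeries q t (q * a) := by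
  ext n
  cases n with
  | zero => simp [sub_mul, mul_assoc, qbinSeries]
  | succ n =>
    simp only [sub_mul, one_mul, mul_assoc, map_sub, coeff_C_mul, coeff_succ_X_mul, qbinSeries,
      coeff_mk]
    linear_combination a ^ (n + 1) * qbin_succ t hq n

lemma coeff_qbinSeries_mul (q t a b : ℂ) (n : ℕ) :
    coeff n (qbinSeries q t a * qbinSeries q t b) =
      ∑ x ∈ antidiagonal n, qbin q t x.1 * qbin q t x.2 * (a ^ x.1 * b ^ x.2) := by
  rw [coeff_mul]
  refine sum_congr rfl fun x _ => ?_
  simp only [qbinSeries, coeff_mk]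
  ring

lemma coeff_qbinSeries_mul_inv (q t X : ℂ) (n : ℕ) :
    coeff n (qbinSeries q t X * qbinSeries q t X⁻¹) = rogersR q t n X :=
  coeff_qbinSeries_mul ..

lemma coeff_qbinSeries_mul_inv_scaled (q t X : ℂ) (n : ℕ) :
    coeff n (qbinSeries q t (q * X) * qbinSeries q t (q * X⁻¹)) = q ^ n * rogersR q t n X := by
  rw [coeff_qbinSeries_mul, rogersR, mul_sum]
  refine sum_congr rfl fun x hx => ?_
  rw [← mem_antidiagonal.1 hx, mul_pow, mul_pow, pow_add]
  ring

lemma coeff_qbinSeries_mul_inv_shift {p : ℂ} (hp : p ≠ 0) (t X : ℂ) (n : ℕ) :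
    coeff n (qbinSeries (p ^ 2) t X * qbinSeries (p ^ 2) t (p ^ 2 * X⁻¹)) =
      p ^ n * rogersR (p ^ 2) t n (X / p) := by
  rw [coeff_qbinSeries_mul, rogersR, mul_sum]
  refine sum_congr rfl fun x hx => ?_
  rw [← mem_antidiagonal.1 hx, inv_div, div_eq_mul_inv, div_eq_mul_inv, mul_pow, mul_pow, mul_pow,
    pow_add]
  have h : p ^ x.1 * p⁻¹ ^ x.1 = 1 := by rw [← mul_pow, mul_inv_cancel₀ hp, one_pow]
  linear_combination (-qbin (p ^ 2) t x.1 * qbin (p ^ 2) t x.2 * X ^ x.1 * X⁻¹ ^ x.2 *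
    p ^ (x.2 * 2)) * h

/-- Pieri rule in lowest degree. -/
lemma pieri_zero {q : ℂ} (t : ℂ) (hq : ∀ i : ℕ, 1 - q ^ (i + 1) ≠ 0) (X : ℂ) :
    (1 - q) * rogersR q t 1 X = (X + X⁻¹) * (1 - t) * rogersR q t 0 X := by
  have h := qbin_succ t hq 0
  simp only [zero_add, pow_one, pow_zero, mul_one, qbin_zero] at h
  simp only [rogersR, Nat.antidiagonal_succ, Nat.antidiagonal_zero]
  simp [qbin_zero]
  linear_combination (X + X⁻¹) * h

lemma qbinSeries_mul_functional {q : ℂ} (t : ℂ) (hq : ∀ i : ℕ, 1 - q ^ (i + 1) ≠ 0) {X : ℂ}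
    (hX : X ≠ 0) :
    (qbinSeries q t X * qbinSeries q t X⁻¹) -
      C (X + X⁻¹) * (PowerSeries.X * (qbinSeries q t X * qbinSeries q t X⁻¹)) +
      PowerSeries.X * (PowerSeries.X * (qbinSeries q t X * qbinSeries q t X⁻¹)) =
    (qbinSeries q t (q * X) * qbinSeries q t (q * X⁻¹)) -
      C (t * (X + X⁻¹)) *
        (PowerSeries.X * (qbinSeries q t (q * X) * qbinSeries q t (q * X⁻¹))) +
      C (t ^ 2) *
        (PowerSeries.X * (PowerSeries.X * (qbinSeries q t (q * X) * qbinSeries q t (q * X⁻¹)))) := by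
  have h1 := qbinSeries_functional t hq X
  have h2 := qbinSeries_functional t hq X⁻¹
  have h3 : C X * C X⁻¹ = (1 : PowerSeries ℂ) := by rw [← map_mul, mul_inv_cancel₀ hX, map_one]
  simp only [map_add, map_mul, map_pow] at *
  linear_combination (1 - C X⁻¹ * PowerSeries.X) * qbinSeries q t X⁻¹ * h1 +
    (1 - C t * C X * PowerSeries.X) * qbinSeries q t (q * X) * h2 +
    (C t ^ 2 * PowerSeries.X ^ 2 * qbinSeries q t (q * X) * qbinSeries q t (q * X⁻¹) -
      PowerSeries.X ^ 2 * qbinSeries q t X * qbinSeries q t X⁻¹) * h3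

/-- Pieri rule. -/
lemma pieri_succ {q : ℂ} (t : ℂ) (hq : ∀ i : ℕ, 1 - q ^ (i + 1) ≠ 0) {X : ℂ} (hX : X ≠ 0)
    (n : ℕ) :
    (1 - q ^ (n + 2)) * rogersR q t (n + 2) X + (1 - t ^ 2 * q ^ n) * rogersR q t n X =
      (X + X⁻¹) * (1 - t * q ^ (n + 1)) * rogersR q t (n + 1) X := by
  have h := congrArg (coeff (n + 2)) (qbinSeries_mul_functional t hq hX)
  simp only [map_add (coeff (n + 2)), map_sub (coeff (n + 2)), coeff_C_mul, coeff_succ_X_mul,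
    coeff_qbinSeries_mul_inv, coeff_qbinSeries_mul_inv_scaled] at h
  linear_combination h

lemma qbinSeries_structure {q : ℂ} (t : ℂ) (hq : ∀ i : ℕ, 1 - q ^ (i + 1) ≠ 0) {Y : ℂ}
    (hY : Y ≠ 0) :
    C (t - Y ^ 2) * (PowerSeries.X * (qbinSeries q t Y * qbinSeries q t (q * Y⁻¹))) =
      PowerSeries.X * (qbinSeries q t Y * qbinSeries q t Y⁻¹) -
        C Y * (qbinSeries q t Y * qbinSeries q t Y⁻¹) +
        (C Y * (qbinSeries q t (q * Y) * qbinSeries q t (q * Y⁻¹)) -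
        C (t * Y ^ 2) *
          (PowerSeries.X * (qbinSeries q t (q * Y) * qbinSeries q t (q * Y⁻¹)))) := by
  have h1 := qbinSeries_functional t hq Y
  have h2 := qbinSeries_functional t hq Y⁻¹
  have h3 : C Y * C Y⁻¹ = (1 : PowerSeries ℂ) := by rw [← map_mul, mul_inv_cancel₀ hY, map_one]
  simp only [map_sub, map_mul, map_pow] at *
  linear_combination C Y * qbinSeries q t (q * Y⁻¹) * h1 + C Y * qbinSeries q t Y * h2 +
    (PowerSeries.X * qbinSeries q t Y * qbinSeries q t Y⁻¹ -
      PowerSeries.X * qbinSeries q t Y * qbinSeries q t (q * Y⁻¹) * C t) * h3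

/-- First-order shift relation for the Rogers polynomials. -/
lemma shift_down {p : ℂ} (hp : p ≠ 0) (t : ℂ) (hq : ∀ i : ℕ, 1 - (p ^ 2) ^ (i + 1) ≠ 0) {Y : ℂ}
    (hY : Y ≠ 0) (n : ℕ) :
    p ^ n * (t - Y ^ 2) * rogersR (p ^ 2) t n (Y / p) =
      (1 - (p ^ 2) ^ n * t * Y ^ 2) * rogersR (p ^ 2) t n Y -
        (1 - (p ^ 2) ^ (n + 1)) * Y * rogersR (p ^ 2) t (n + 1) Y := by
  have h := congrArg (coeff (n + 1)) (qbinSeries_structure t hq hY)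
  simp only [map_add (coeff (n + 1)), map_sub (coeff (n + 1)), coeff_C_mul, coeff_succ_X_mul,
    coeff_qbinSeries_mul_inv, coeff_qbinSeries_mul_inv_scaled,
    coeff_qbinSeries_mul_inv_shift hp] at h
  linear_combination h

lemma shift_up {p : ℂ} (hp : p ≠ 0) (t : ℂ) (hq : ∀ i : ℕ, 1 - (p ^ 2) ^ (i + 1) ≠ 0) {Y : ℂ}
    (hY : Y ≠ 0) (n : ℕ) :
    p ^ n * (1 - t * Y ^ 2) * rogersR (p ^ 2) t n (p * Y) =
      ((p ^ 2) ^ n * t - Y ^ 2) * rogersR (p ^ 2) t n Y +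
        (1 - (p ^ 2) ^ (n + 1)) * Y * rogersR (p ^ 2) t (n + 1) Y := by
  have h := shift_down hp t hq (inv_ne_zero hY) n
  have e : Y⁻¹ / p = (p * Y)⁻¹ := by field_simp
  rw [e, rogersR_inv, rogersR_inv, rogersR_inv] at h
  rw [mul_comm p Y]
  field_simp at h
  linear_combination -h

/-- The Macdonald difference equation. -/
lemma difference_eq {p : ℂ} (hp : p ≠ 0) (t : ℂ) (hq : ∀ i : ℕ, 1 - (p ^ 2) ^ (i + 1) ≠ 0) {Y : ℂ}
    (hY : Y ≠ 0) (n : ℕ) :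
    p ^ n * ((1 - t * Y ^ 2) * rogersR (p ^ 2) t n (p * Y) +
      (t - Y ^ 2) * rogersR (p ^ 2) t n (Y / p)) =
      (1 - Y ^ 2) * (1 + (p ^ 2) ^ n * t) * rogersR (p ^ 2) t n Y := by
  linear_combination shift_down hp t hq hY n + shift_up hp t hq hY n

lemma twisted_difference_eq {p : ℂ} (hp : p ≠ 0) (t : ℂ)
    (hq : ∀ i : ℕ, 1 - (p ^ 2) ^ (i + 1) ≠ 0) {Y : ℂ} (hY : Y ≠ 0) (n : ℕ) :
    p ^ n * ((t - Y ^ 2) * rogersR (p ^ 2) t n (Y / p) +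
      Y ^ 2 * (1 - t * Y ^ 2) * rogersR (p ^ 2) t n (p * Y)) =
      (1 - Y ^ 2) * ((1 + Y ^ 2) * rogersR (p ^ 2) t n Y -
        (1 - (p ^ 2) ^ (n + 1)) * Y * rogersR (p ^ 2) t (n + 1) Y) := by
  linear_combination shift_down hp t hq hY n + Y ^ 2 * shift_up hp t hq hY n

/-- `R_n(s) = s^{-n} (t²;q)_n / (q;q)_n` for `t = s²`. -/
lemma rogersR_self {q s : ℂ} (hs : s ≠ 0) (hq : ∀ i : ℕ, 1 - q ^ (i + 1) ≠ 0) (n : ℕ) :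
    rogersR q (s ^ 2) n s = s⁻¹ ^ n * qbin q ((s ^ 2) ^ 2) n := by
  induction n using Nat.twoStepInduction with
  | zero => simp [rogersR_zero, qbin_zero]
  | one =>
    have h := pieri_zero (s ^ 2) hq s
    have h' := qbin_succ ((s ^ 2) ^ 2) hq 0
    have := hq 0
    simp only [zero_add, pow_one, qbin_zero, rogersR_zero, pow_zero, mul_one] at *
    refine mul_left_cancel₀ this ?_
    rw [h, mul_left_comm, h']
    field_simp
    ring
  | more n ih0 ih1 =>
    have h := pieri_succ (s ^ 2) hq hs n
    have h1 := qbin_succ ((s ^ 2) ^ 2) hq n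
    have h2 := qbin_succ ((s ^ 2) ^ 2) hq (n + 1)
    refine mul_left_cancel₀ (hq (n + 1)) ?_
    rw [ih0, ih1] at h
    rw [mul_left_comm, h2, eq_sub_of_add_eq h, mul_left_comm _ (s⁻¹ ^ n), ← h1]
    simp only [inv_pow, pow_succ]
    field_simp
    ring


lemma qbin_ne_zero {q t : ℂ} (hq : ∀ i : ℕ, 1 - q ^ (i + 1) ≠ 0) (ht : ∀ i : ℕ, 1 - t * q ^ i ≠ 0)
    (i : ℕ) : qbin q t i ≠ 0 :=
  prod_ne_zero_iff.2 fun j _ => div_ne_zero (ht j) (hq j)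

lemma rogersR_self_succ {q s : ℂ} (hs : s ≠ 0) (hq : ∀ i : ℕ, 1 - q ^ (i + 1) ≠ 0) (n : ℕ) :
    (1 - q ^ (n + 1)) * s * rogersR q (s ^ 2) (n + 1) s =
      (1 - (s ^ 2) ^ 2 * q ^ n) * rogersR q (s ^ 2) n s := by
  rw [rogersR_self hs hq, rogersR_self hs hq, mul_left_comm _ (s⁻¹ ^ n),
    ← qbin_succ ((s ^ 2) ^ 2) hq n, pow_succ]
  linear_combination s⁻¹ ^ n * (1 - q ^ (n + 1)) * qbin q ((s ^ 2) ^ 2) (n + 1) *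
    mul_inv_cancel₀ hs

/-- Duality (evaluation symmetry) of the Rogers polynomials. -/
lemma duality {p s : ℂ} (hp : p ≠ 0) (hs : s ≠ 0) (hq : ∀ i : ℕ, 1 - (p ^ 2) ^ (i + 1) ≠ 0)
    (n m : ℕ) :
    rogersR (p ^ 2) (s ^ 2) n (p ^ m * s) * rogersR (p ^ 2) (s ^ 2) m s =
      rogersR (p ^ 2) (s ^ 2) m (p ^ n * s) * rogersR (p ^ 2) (s ^ 2) n s := by
  have key : ∀ n m : ℕ, (1 - (s ^ 2) ^ 2 * (p ^ 2) ^ n) *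
      (rogersR (p ^ 2) (s ^ 2) m (p ^ (n + 1) * s)) * p ^ m +
      s ^ 2 * (1 - (p ^ 2) ^ n) * rogersR (p ^ 2) (s ^ 2) m (p ^ n * s / p) * p ^ m =
      (1 - s ^ 2 * (p ^ 2) ^ n) * (1 + (p ^ 2) ^ m * s ^ 2) *
        rogersR (p ^ 2) (s ^ 2) m (p ^ n * s) := fun n m => by
    have h := difference_eq hp (s ^ 2) hq (mul_ne_zero (pow_ne_zero n hp) hs) m
    rw [show p * (p ^ n * s) = p ^ (n + 1) * s by ring] at h
    linear_combination h
  have hY : ∀ m, p ^ m * s ≠ 0 := fun m => mul_ne_zero (pow_ne_zero m hp) hs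
  induction n using Nat.twoStepInduction generalizing m with
  | zero => simp [rogersR_zero]
  | one =>
    have h := key 0 m
    have h' := pieri_zero (s ^ 2) hq (p ^ m * s)
    have r := rogersR_self_succ hs hq 0
    have hpm := hY m
    have hpm' := mul_inv_cancel₀ hpm
    have hq0 := hq 0
    simp only [rogersR_zero, pow_zero, one_mul, mul_one, sub_self, mul_zero, zero_mul, add_zero,
      zero_add, pow_one] at *
    refine mul_left_cancel₀ (mul_ne_zero hq0 hpm) ?_
    linear_combination rogersR (p ^ 2) (s ^ 2) m s * (p ^ m * s * h' + (1 - s ^ 2) * hpm') -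
      p ^ m * rogersR (p ^ 2) (s ^ 2) m (p * s) * r - h
  | more n ih0 ih1 =>
    have h := key (n + 1) m
    have h' := pieri_succ (s ^ 2) hq (hY m) n
    have e : p ^ (n + 1) * s / p = p ^ n * s := by rw [pow_succ]; field_simp
    have r1 := rogersR_self_succ hs hq n
    have r2 := rogersR_self_succ hs hq (n + 1)
    rw [e] at h
    refine mul_left_cancel₀ (mul_ne_zero (hq (n + 1)) (hY m)) ?_
    have hpm' := mul_inv_cancel₀ (hY m)
    linear_combination rogersR (p ^ 2) (s ^ 2) m s * (p ^ m * s * h' +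
        (1 - s ^ 2 * (p ^ 2) ^ (n + 1)) * rogersR (p ^ 2) (s ^ 2) (n + 1) (p ^ m * s) * hpm') +
      (p ^ (2 * m) * s ^ 2 + 1) * (1 - s ^ 2 * (p ^ 2) ^ (n + 1)) * ih1 m -
      p ^ m * s * (1 - (s ^ 2) ^ 2 * (p ^ 2) ^ n) * ih0 m -
      p ^ m * rogersR (p ^ 2) (s ^ 2) m (p ^ (n + 2) * s) * r2 -
      rogersR (p ^ 2) (s ^ 2) (n + 1) s * h +
      p ^ m * s * rogersR (p ^ 2) (s ^ 2) m (p ^ n * s) * r1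

/-- Folding a sum over `0, …, n` about its midpoint. -/
lemma sum_range_fold (f : ℕ → ℂ) (n : ℕ) :
    ∑ i ∈ range n.succ, f i =
      ∑ j ∈ range (n / 2 + 1), if n - 2 * j = 0 then f j else f j + f (n - j) := by
  rcases Nat.even_or_odd' n with ⟨k, rfl | rfl⟩
  · rw [show 2 * k / 2 = k by omega, show (2 * k).succ = (k + 1) + k by omega, sum_range_add,
      sum_range_succ _ k, sum_range_succ _ k, ← sum_range_reflect (fun x => f (k + 1 + x)) k,
      add_right_comm, ← sum_add_distrib, if_pos (by omega)]
    refine congrArg (· + f k) (sum_congr rfl fun j hj => ?_)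
    have hj := mem_range.1 hj
    rw [if_neg (by omega), show k + 1 + (k - 1 - j) = 2 * k - j by omega]
  · rw [show (2 * k + 1) / 2 = k by omega, show (2 * k + 1).succ = (k + 1) + (k + 1) by omega,
      sum_range_add, ← sum_range_reflect (fun x => f (k + 1 + x)) (k + 1), ← sum_add_distrib]
    refine sum_congr rfl fun j hj => ?_
    have hj := mem_range.1 hj
    rw [if_neg (by omega), show k + 1 + (k + 1 - 1 - j) = 2 * k + 1 - j by omega]

/-- Relation between the monic Rogers polynomial and its `R` normalization. -/
lemma rogersA1_eq {q : ℝ} {t : ℂ} (hq : ∀ i : ℕ, 1 - (q : ℂ) ^ (i + 1) ≠ 0)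
    (ht : ∀ i : ℕ, 1 - t * (q : ℂ) ^ i ≠ 0) {X : ℂ} (hX : X ≠ 0) (n : ℕ) :
    qbin q t n * RogersA1 q t n X = rogersR q t n X := by
  have hprod : ∀ j ≤ n, qbin q t n * (∏ i ∈ range j,
      ((1 - (q : ℂ) ^ (n - i)) * (1 - t * (q : ℂ) ^ i)) /
      ((1 - (q : ℂ) ^ (1 + i)) * (1 - t * (q : ℂ) ^ (n - i - 1)))) =
      qbin q t j * qbin q t (n - j) := by
    intro j hj
    induction j with
    | zero => simp [qbin_zero]
    | succ j ih =>
      obtain ⟨k, rfl⟩ := Nat.exists_eq_add_of_le hj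
      rw [prod_range_succ, ← mul_assoc, ih (by omega)]
      have h1 := qbin_succ t hq j
      have h2 := qbin_succ t hq k
      have e1 : j + 1 + k - j = k + 1 := by omega
      have e2 : j + 1 + k - (j + 1) = k := by omega
      rw [e1, e2, Nat.add_sub_cancel, add_comm 1 j, ← mul_div_assoc,
        div_eq_iff (mul_ne_zero (hq j) (ht k))]
      linear_combination (1 - t * (q : ℂ) ^ j) * qbin q t j * h2 - qbin q t k * (1 - t * (q : ℂ) ^ k) * h1
  have hRog : RogersA1 q t n X = ∑ j ∈ range (n / 2 + 1), (∏ i ∈ range j,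
      ((1 - (q : ℂ) ^ (n - i)) * (1 - t * (q : ℂ) ^ i)) /
      ((1 - (q : ℂ) ^ (1 + i)) * (1 - t * (q : ℂ) ^ (n - i - 1)))) * Msym (n - 2 * j) X := by
    rw [RogersA1, sum_range_succ', add_comm]
    congr 1
    · rw [range_eq_Ico, sum_Ico_add' (fun j => (∏ i ∈ range j,
        ((1 - (q : ℂ) ^ (n - i)) * (1 - t * (q : ℂ) ^ i)) /
        ((1 - (q : ℂ) ^ (1 + i)) * (1 - t * (q : ℂ) ^ (n - i - 1)))) * Msym (n - 2 * j) X) 0 (n / 2) 1]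
      rfl
    · simp
  rw [hRog, mul_sum, rogersR, Nat.sum_antidiagonal_eq_sum_range_succ_mk]
  have hpow : ∀ a b : ℕ, a ≤ b → X ^ a * X⁻¹ ^ b = X⁻¹ ^ (b - a) := fun a b h => by
    obtain ⟨c, rfl⟩ := Nat.exists_eq_add_of_le h
    rw [pow_add, ← mul_assoc, ← mul_pow, mul_inv_cancel₀ hX, one_pow, one_mul,
      Nat.add_sub_cancel_left]
  have hpow' : ∀ a b : ℕ, a ≤ b → X ^ b * X⁻¹ ^ a = X ^ (b - a) := fun a b h => by
    obtain ⟨c, rfl⟩ := Nat.exists_eq_add_of_le h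
    rw [pow_add, mul_right_comm, ← mul_pow, mul_inv_cancel₀ hX, one_pow, one_mul,
      Nat.add_sub_cancel_left]
  have hterm : ∀ j ∈ range (n / 2 + 1), qbin q t n * ((∏ i ∈ range j,
      ((1 - (q : ℂ) ^ (n - i)) * (1 - t * (q : ℂ) ^ i)) /
      ((1 - (q : ℂ) ^ (1 + i)) * (1 - t * (q : ℂ) ^ (n - i - 1)))) * Msym (n - 2 * j) X) =
      qbin q t j * qbin q t (n - j) * Msym (n - 2 * j) X := fun j hj => by
    rw [← mul_assoc, hprod j (by have := mem_range.1 hj; omega)]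
  rw [sum_congr rfl hterm]
  rw [sum_range_fold _ n]
  refine sum_congr rfl fun j hj => ?_
  have hj : 2 * j ≤ n := by have := mem_range.1 hj; omega
  have hnj : n - (n - j) = j := by omega
  rw [hnj, Msym, hpow j (n - j) (by omega), hpow' j (n - j) (by omega),
    show n - j - j = n - 2 * j by omega]
  split_ifs with h0
  · rw [h0, pow_zero]
  · ring


open Topology

lemma one_sub_pow_succ_ne_zero {q : ℂ} (hq : ‖q‖ < 1) (i : ℕ) : 1 - q ^ (i + 1) ≠ 0 := by
  intro h
  have h1 : ‖q ^ (i + 1)‖ < 1 := by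
    rw [norm_pow]
    exact pow_lt_one₀ (norm_nonneg _) hq (Nat.succ_ne_zero i)
  rw [← sub_eq_zero.1 h, norm_one] at h1
  exact lt_irrefl _ h1

lemma one_sub_mul_pow_ne_zero {q t : ℂ} (hq : ‖q‖ < 1) (ht : ‖t‖ < 1) (i : ℕ) :
    1 - t * q ^ i ≠ 0 := by
  intro h
  have h1 : ‖t * q ^ i‖ < 1 := by
    rw [norm_mul, norm_pow]
    exact (mul_le_of_le_one_right (norm_nonneg _)
      (pow_le_one₀ (norm_nonneg _) hq.le)).trans_lt ht
  rw [← sub_eq_zero.1 h, norm_one] at h1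
  exact lt_irrefl _ h1

lemma multipliable_qbin {q : ℂ} (hq : ‖q‖ < 1) (t : ℂ) :
    Multipliable fun j : ℕ => (1 - t * q ^ j) / (1 - q ^ (j + 1)) := by
  have h : (fun j : ℕ => (1 - t * q ^ j) / (1 - q ^ (j + 1))) =
      fun j : ℕ => 1 + (q - t) * (q ^ j / (1 - q ^ (j + 1))) := by
    ext j
    have := one_sub_pow_succ_ne_zero hq j
    field_simp
    ring
  rw [h]
  refine multipliable_one_add_of_summable (Summable.norm ?_)
  refine Summable.mul_left _ ?_
  have hlim : Tendsto (fun j : ℕ => (1 - q ^ (j + 1))⁻¹) atTop (𝓝 1) := by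
    have := ((tendsto_pow_atTop_nhds_zero_of_norm_lt_one hq).comp (tendsto_add_atTop_nat 1))
    simpa using (this.const_sub 1).inv₀ (by simp)
  obtain ⟨K, hK⟩ := hlim.norm.bddAbove_range
  refine Summable.of_norm_bounded ((summable_geometric_of_lt_one
    (norm_nonneg q) hq).mul_right K) fun j => ?_
  rw [div_eq_mul_inv, norm_mul, norm_pow]
  exact mul_le_mul_of_nonneg_left (hK ⟨j, rfl⟩) (by positivity)

lemma tendsto_qbin {q : ℂ} (hq : ‖q‖ < 1) (t : ℂ) :
    Tendsto (qbin q t) atTop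
      (𝓝 ((1 - t) * ∏' j : ℕ, (1 - t * q ^ (j + 1)) / (1 - q ^ (j + 1)))) := by
  have h1 := (multipliable_qbin hq t).hasProd.tendsto_prod_nat
  have h2 := ((multipliable_qbin hq (t * q)).hasProd.tendsto_prod_nat).const_mul (1 - t)
  have h3 : Tendsto (fun i : ℕ => 1 - t * q ^ i) atTop (𝓝 1) := by
    simpa using ((tendsto_pow_atTop_nhds_zero_of_norm_lt_one hq).const_mul t).const_sub 1
  have h4 := h3.mul h1
  have e : ∀ i : ℕ, (1 - t * q ^ i) * ∏ j ∈ range i, (1 - t * q ^ j) / (1 - q ^ (j + 1)) =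
      (1 - t) * ∏ j ∈ range i, (1 - t * q * q ^ j) / (1 - q ^ (j + 1)) := fun i => by
    simp only [prod_div_distrib, mul_assoc t q, ← pow_succ', mul_div_assoc']
    congr 1
    rw [mul_comm, ← prod_range_succ fun j => 1 - t * q ^ j, prod_range_succ', pow_zero, mul_one,
      mul_comm]
  rw [tendsto_congr e] at h4
  have := tendsto_nhds_unique h4 h2
  simp only [one_mul, mul_assoc t q, ← pow_succ'] at this
  rw [← this]
  exact h1

lemma exists_qbin_bound {q : ℂ} (hq : ‖q‖ < 1) (t : ℂ) : ∃ K, 0 < K ∧ ∀ i, ‖qbin q t i‖ ≤ K := by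
  obtain ⟨K, hK⟩ := (tendsto_qbin hq t).norm.bddAbove_range
  exact ⟨max K 1, by positivity, fun i => (hK ⟨i, rfl⟩).trans (le_max_left _ _)⟩

lemma norm_one_sub_mul_pow_le {q : ℂ} (hq : ‖q‖ < 1) (t : ℂ) (i : ℕ) :
    ‖1 - t * q ^ i‖ ≤ 1 + ‖t‖ := by
  refine (norm_sub_le _ _).trans ?_
  rw [norm_one, norm_mul, norm_pow]
  exact add_le_add_right (mul_le_of_le_one_right (norm_nonneg _)
    (pow_le_one₀ (norm_nonneg _) hq.le)) _

/-- Summand of the coefficient of `X^k` in the theta expansion. -/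
def thetaTerm (q t : ℂ) (k j : ℕ) : ℂ :=
  q ^ (j ^ 2 + k * j) * (1 - t * q ^ (k + 2 * j)) * qbin q t j * qbin q t (j + k)

lemma norm_thetaTerm_le {q : ℂ} (hq : ‖q‖ < 1) {t : ℂ} {K : ℝ} (hK0 : 0 < K)
    (hK : ∀ i, ‖qbin q t i‖ ≤ K) (k j : ℕ) :
    ‖thetaTerm q t k j‖ ≤ ‖q‖ ^ j * ((1 + ‖t‖) * K * K) := by
  have h0 : ‖q‖ ^ (j ^ 2 + k * j) ≤ ‖q‖ ^ j :=
    pow_le_pow_of_le_one (norm_nonneg _) hq.le (by nlinarith [Nat.le_self_pow two_ne_zero j])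
  rw [thetaTerm, norm_mul, norm_mul, norm_mul, norm_pow, mul_assoc, mul_assoc, ← mul_assoc ‖1 - _‖]
  have := norm_one_sub_mul_pow_le hq t (k + 2 * j)
  have := hK j
  have := hK (j + k)
  gcongr

lemma summable_thetaTerm {q : ℂ} (hq : ‖q‖ < 1) (t : ℂ) (k : ℕ) : Summable (thetaTerm q t k) := by
  obtain ⟨K, hK0, hK⟩ := exists_qbin_bound hq t
  exact Summable.of_norm_bounded ((summable_geometric_of_lt_one (norm_nonneg _) hq).mul_right _)
    (norm_thetaTerm_le hq hK0 hK k)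

lemma thetaTerm_sub {q : ℂ} (hq : ‖q‖ < 1) (t : ℂ) (k j : ℕ) :
    thetaTerm q t k j - thetaTerm q t (k + 1) j =
      q ^ (j ^ 2 + k * j) * (1 - q ^ j) * qbin q t j * qbin q t (j + k) -
      q ^ ((j + 1) ^ 2 + k * (j + 1)) * (1 - q ^ (j + 1)) * qbin q t (j + 1) *
        qbin q t (j + 1 + k) := by
  have h1 := qbin_succ t (one_sub_pow_succ_ne_zero hq) j
  have h2 := qbin_succ t (one_sub_pow_succ_ne_zero hq) (j + k)
  rw [show j + 1 + k = j + k + 1 by ring, thetaTerm, thetaTerm, ← add_assoc]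
  linear_combination q ^ ((j + 1) ^ 2 + k * (j + 1)) * qbin q t (j + k + 1) * h1 -
    q ^ (j ^ 2 + k * j + j) * qbin q t j * h2

lemma tsum_thetaTerm_succ {q : ℂ} (hq : ‖q‖ < 1) (t : ℂ) (k : ℕ) :
    ∑' j, thetaTerm q t k j = ∑' j, thetaTerm q t (k + 1) j := by
  rw [← sub_eq_zero, ← (summable_thetaTerm hq t k).tsum_sub (summable_thetaTerm hq t (k + 1))]
  have hs := ((summable_thetaTerm hq t k).sub (summable_thetaTerm hq t (k + 1))).hasSum
  refine tendsto_nhds_unique hs.tendsto_sum_nat ?_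
  simp only [thetaTerm_sub hq]
  have e : ∀ N : ℕ, ∑ j ∈ range N,
      (q ^ (j ^ 2 + k * j) * (1 - q ^ j) * qbin q t j * qbin q t (j + k) -
      q ^ ((j + 1) ^ 2 + k * (j + 1)) * (1 - q ^ (j + 1)) * qbin q t (j + 1) *
        qbin q t (j + 1 + k)) =
      -(q ^ (N ^ 2 + k * N) * (1 - q ^ N) * qbin q t N * qbin q t (N + k)) := fun N => by
    rw [sum_range_sub' fun j => q ^ (j ^ 2 + k * j) * (1 - q ^ j) * qbin q t j * qbin q t (j + k)]
    simp
  rw [tendsto_congr e, ← neg_zero]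
  refine Tendsto.neg ?_
  have hpow := tendsto_pow_atTop_nhds_zero_of_norm_lt_one hq
  have h1 : Tendsto (fun N : ℕ => q ^ (N ^ 2 + k * N)) atTop (𝓝 0) :=
    hpow.comp (tendsto_atTop_mono (fun N => (Nat.le_self_pow two_ne_zero N).trans
      (Nat.le_add_right _ _)) tendsto_id)
  simpa using ((h1.mul (hpow.const_sub 1)).mul (tendsto_qbin hq t)).mul
    ((tendsto_qbin hq t).comp (tendsto_add_atTop_nat k))

lemma tsum_thetaTerm {q : ℂ} (hq : ‖q‖ < 1) (t : ℂ) (k : ℕ) :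
    ∑' j, thetaTerm q t k j =
      (1 - t) * ∏' j : ℕ, (1 - t * q ^ (j + 1)) / (1 - q ^ (j + 1)) := by
  set L := (1 - t) * ∏' j : ℕ, (1 - t * q ^ (j + 1)) / (1 - q ^ (j + 1)) with hL
  obtain ⟨K, hK0, hK⟩ := exists_qbin_bound hq t
  have hpow := tendsto_pow_atTop_nhds_zero_of_norm_lt_one hq
  have hlim : Tendsto (fun k => ∑' j, thetaTerm q t k j) atTop
      (𝓝 (∑' j : ℕ, if j = 0 then L else 0)) := by
    refine tendsto_tsum_of_dominated_convergence
      ((summable_geometric_of_lt_one (norm_nonneg _) hq).mul_right ((1 + ‖t‖) * K * K)) ?_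
      (Eventually.of_forall fun k j => norm_thetaTerm_le hq hK0 hK k j)
    intro j
    have hc : Tendsto (fun k => qbin q t (j + k)) atTop (𝓝 L) := by
      simp only [add_comm j]
      exact (tendsto_qbin hq t).comp (tendsto_add_atTop_nat j)
    have h1 : Tendsto (fun k => 1 - t * q ^ (k + 2 * j)) atTop (𝓝 1) := by
      simpa using ((hpow.comp (tendsto_add_atTop_nat (2 * j))).const_mul t).const_sub 1
    have h2 : Tendsto (fun k => q ^ (j ^ 2 + k * j)) atTop (𝓝 (if j = 0 then 1 else 0)) := by
      split_ifs with hj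
      · simp [hj]
      · exact hpow.comp (tendsto_atTop_mono (fun k => by
          have := Nat.pos_of_ne_zero hj
          show k ≤ j ^ 2 + k * j
          nlinarith) tendsto_id)
    have h := ((h2.mul h1).mul_const (qbin q t j)).mul hc
    refine h.congr' (Eventually.of_forall fun k => rfl) |>.trans (le_of_eq ?_)
    split_ifs with hj <;> simp [hj, qbin_zero]
  have hconst : ∀ k, ∑' j, thetaTerm q t k j = ∑' j, thetaTerm q t 0 j := fun k => by
    induction k with
    | zero => rfl
    | succ k ih => rw [← tsum_thetaTerm_succ hq, ih]
  rw [tsum_ite_eq, tendsto_congr hconst] at hlim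
  rw [hconst]
  exact tendsto_nhds_unique tendsto_const_nhds hlim

/-- A sequence of at most exponential growth. -/
def ExpBounded (f : ℕ → ℂ) : Prop := ∃ K B : ℝ, 0 ≤ K ∧ 0 ≤ B ∧ ∀ m, ‖f m‖ ≤ K * B ^ m

lemma ExpBounded.mul {f g : ℕ → ℂ} (hf : ExpBounded f) (hg : ExpBounded g) :
    ExpBounded fun m => f m * g m := by
  obtain ⟨K, B, hK, hB, h⟩ := hf
  obtain ⟨K', B', hK', hB', h'⟩ := hg
  refine ⟨K * K', B * B', by positivity, by positivity, fun m => ?_⟩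
  rw [norm_mul, mul_pow, mul_mul_mul_comm]
  exact mul_le_mul (h m) (h' m) (norm_nonneg _) (by positivity)

lemma ExpBounded.shift {f : ℕ → ℂ} (hf : ExpBounded f) : ExpBounded fun m => f (m + 1) := by
  obtain ⟨K, B, hK, hB, h⟩ := hf
  refine ⟨K * B, B, by positivity, hB, fun m => (h (m + 1)).trans_eq ?_⟩
  ring

lemma gauss_bound {u : ℝ} (hu0 : 0 ≤ u) (hu1 : u < 1) {A : ℝ} (hA : 0 ≤ A) :
    ∃ B, 0 ≤ B ∧ ∀ m : ℕ, u ^ m ^ 2 * A ^ m ≤ B * (1 / 2) ^ m := by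
  have hlim : Tendsto (fun m : ℕ => u ^ m * (2 * A)) atTop (𝓝 0) := by
    simpa using (tendsto_pow_atTop_nhds_zero_of_lt_one hu0 hu1).mul_const (2 * A)
  obtain ⟨N, hN⟩ := eventually_atTop.1 (hlim.eventually (eventually_le_nhds zero_lt_one))
  have hnn : ∀ m : ℕ, 0 ≤ u ^ m ^ 2 * (2 * A) ^ m := fun m => by positivity
  refine ⟨1 + ∑ m ∈ range N, u ^ m ^ 2 * (2 * A) ^ m,
    add_nonneg zero_le_one (sum_nonneg fun m _ => hnn m), fun m => ?_⟩
  have h : u ^ m ^ 2 * (2 * A) ^ m ≤ 1 + ∑ m ∈ range N, u ^ m ^ 2 * (2 * A) ^ m := by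
    rcases lt_or_ge m N with h | h
    · exact (single_le_sum (f := fun m => u ^ m ^ 2 * (2 * A) ^ m) (fun m _ => hnn m)
        (mem_range.2 h)).trans (le_add_of_nonneg_left zero_le_one)
    · refine le_add_of_le_of_nonneg ?_ (sum_nonneg fun m _ => hnn m)
      rw [pow_two, pow_mul, ← mul_pow]
      exact pow_le_one₀ (by positivity) (hN m h)
  calc u ^ m ^ 2 * A ^ m = u ^ m ^ 2 * (2 * A) ^ m * (1 / 2) ^ m := by
        rw [mul_assoc, ← mul_pow]
        congr 2
        ring
    _ ≤ _ := by gcongr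

lemma ExpBounded.summable {u : ℝ} (hu0 : 0 ≤ u) (hu1 : u < 1) {f : ℕ → ℂ} (hf : ExpBounded f) :
    Summable fun m : ℕ => (u : ℂ) ^ m ^ 2 * f m := by
  obtain ⟨K, B, hK, hB, h⟩ := hf
  obtain ⟨D, -, hD⟩ := gauss_bound hu0 hu1 hB
  refine Summable.of_norm_bounded
    ((summable_geometric_of_lt_one (by norm_num) (by norm_num : (1 / 2 : ℝ) < 1)).mul_left (K * D))
    fun m => ?_
  rw [norm_mul, norm_pow, Complex.norm_of_nonneg hu0, mul_assoc K]
  calc u ^ m ^ 2 * ‖f m‖ ≤ u ^ m ^ 2 * (K * B ^ m) := by gcongr; exact h m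
    _ = K * (u ^ m ^ 2 * B ^ m) := by ring
    _ ≤ K * (D * (1 / 2) ^ m) := mul_le_mul_of_nonneg_left (hD m) hK
    _ = _ := by ring

lemma expBounded_one_sub {q : ℂ} (hq : ‖q‖ < 1) (t : ℂ) : ExpBounded fun m => 1 - t * q ^ m :=
  ⟨1 + ‖t‖, 1, by positivity, zero_le_one, fun m => by
    simpa using norm_one_sub_mul_pow_le hq t m⟩

lemma norm_rogersR_le {q t : ℂ} {K : ℝ} (hK0 : 0 < K) (hK : ∀ i, ‖qbin q t i‖ ≤ K) (n : ℕ)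
    {Y : ℂ} {A : ℝ} (h1 : ‖Y‖ ≤ A) (h2 : ‖Y⁻¹‖ ≤ A) :
    ‖rogersR q t n Y‖ ≤ (n + 1) * (K * K * A ^ n) := by
  have hA : 0 ≤ A := (norm_nonneg _).trans h1
  refine (norm_sum_le_of_le (f := fun x : ℕ × ℕ =>
    qbin q t x.1 * qbin q t x.2 * (Y ^ x.1 * Y⁻¹ ^ x.2)) (n := fun _ => K * K * A ^ n) _
    fun x hx => ?_).trans_eq (by simp)
  rw [← mem_antidiagonal.1 hx, norm_mul, norm_mul, norm_mul, norm_pow, norm_pow, pow_add]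
  have := hK x.1
  have := hK x.2
  gcongr

lemma expBounded_rogersR {q : ℂ} (hq : ‖q‖ < 1) (t X : ℂ) :
    ExpBounded fun m => rogersR q t m X := by
  obtain ⟨K, hK0, hK⟩ := exists_qbin_bound hq t
  refine ⟨K * K, 2 * max ‖X‖ ‖X⁻¹‖, by positivity, by positivity, fun m => ?_⟩
  refine (norm_rogersR_le hK0 hK m (le_max_left _ ‖X⁻¹‖) (le_max_right _ _)).trans ?_
  have h : (m : ℝ) + 1 ≤ 2 ^ m := by exact_mod_cast Nat.lt_two_pow_self (n := m)
  rw [mul_pow, mul_left_comm]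
  gcongr

lemma expBounded_rogersR_geom {q : ℂ} (hq : ‖q‖ < 1) (t : ℂ) (n : ℕ) {p s : ℝ} (hp0 : 0 < p)
    (hp1 : p < 1) (hs0 : 0 < s) (hs1 : s < 1) :
    ExpBounded fun m => rogersR q t n ((p : ℂ) ^ m * s) := by
  obtain ⟨K, hK0, hK⟩ := exists_qbin_bound hq t
  refine ⟨(n + 1) * (K * K * s⁻¹ ^ n), p⁻¹ ^ n, by positivity, by positivity, fun m => ?_⟩
  have hle : p ^ m * s ≤ 1 := mul_le_one₀ (pow_le_one₀ hp0.le hp1.le) hs0.le hs1.le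
  have hn : ‖(p : ℂ) ^ m * s‖ = p ^ m * s := by
    rw [norm_mul, norm_pow, Complex.norm_of_nonneg hp0.le, Complex.norm_of_nonneg hs0.le]
  refine (norm_rogersR_le (A := (p ^ m * s)⁻¹) hK0 hK n ?_ ?_).trans_eq ?_
  · rw [hn]
    exact hle.trans (one_le_inv₀ (by positivity) |>.2 hle)
  · rw [norm_inv, hn]
  · rw [mul_inv, mul_pow, ← pow_mul, ← inv_pow, ← pow_mul]
    ring

/-- `ℤ × ℕ ≃ ℕ × ℕ`, with inverse `(i, j) ↦ (i - j, min i j)`. -/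
def diffMinEquiv : ℤ × ℕ ≃ ℕ × ℕ where
  toFun x := (x.2 + x.1.toNat, x.2 + (-x.1).toNat)
  invFun y := ((y.1 : ℤ) - y.2, min y.1 y.2)
  left_inv x := by
    ext <;> simp
    omega
  right_inv y := by ext <;> simp <;> omega

/-- Expansion of the theta function in Rogers polynomials. -/
lemma theta_expansion {u : ℝ} (hu0 : 0 < u) (hu1 : u < 1) (t : ℂ) {X : ℂ} (hX : X ≠ 0) :
    ∑' m : ℕ, (u : ℂ) ^ m ^ 2 * ((1 - t * ((u : ℂ) ^ 4) ^ m) * rogersR ((u : ℂ) ^ 4) t m X) =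
      ((1 - t) * ∏' j : ℕ, (1 - t * ((u : ℂ) ^ 4) ^ (j + 1)) / (1 - ((u : ℂ) ^ 4) ^ (j + 1))) *
        ∑' k : ℤ, (u : ℂ) ^ (k ^ 2) * X ^ k := by
  have hu : ‖(u : ℂ)‖ = u := Complex.norm_of_nonneg hu0.le
  have hq : ‖(u : ℂ) ^ 4‖ < 1 := by
    rw [norm_pow, hu]
    exact pow_lt_one₀ hu0.le hu1 (by norm_num)
  set q : ℂ := (u : ℂ) ^ 4 with hqdef
  obtain ⟨K, hK0, hK⟩ := exists_qbin_bound hq t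
  let f : ℕ × ℕ → ℂ := fun x => (u : ℂ) ^ (x.1 + x.2) ^ 2 * ((1 - t * q ^ (x.1 + x.2)) *
    (qbin q t x.1 * qbin q t x.2 * (X ^ x.1 * X⁻¹ ^ x.2)))
  have hf : Summable f := by
    obtain ⟨D, hD0, hD⟩ := gauss_bound hu0.le hu1 (A := max ‖X‖ ‖X⁻¹‖) (by positivity)
    have hgeo := summable_geometric_of_lt_one (by norm_num) (by norm_num : (1 / 2 : ℝ) < 1)
    have hs := (hgeo.mul_of_nonneg hgeo (fun _ => by positivity) (fun _ => by positivity)).mul_left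
      ((1 + ‖t‖) * (K * K) * D)
    refine Summable.of_norm_bounded hs fun x => ?_
    have hpow : ‖X‖ ^ x.1 * ‖X⁻¹‖ ^ x.2 ≤ max ‖X‖ ‖X⁻¹‖ ^ (x.1 + x.2) := by
      rw [pow_add]
      gcongr
      · exact le_max_left _ _
      · exact le_max_right _ _
    have h1 := norm_one_sub_mul_pow_le hq t (x.1 + x.2)
    have h2 := hK x.1
    have h3 := hK x.2
    simp only [f, norm_mul]
    rw [norm_pow, hu, norm_pow, norm_pow X⁻¹]
    calc u ^ (x.1 + x.2) ^ 2 * (‖1 - t * q ^ (x.1 + x.2)‖ * (‖qbin q t x.1‖ * ‖qbin q t x.2‖ *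
          (‖X‖ ^ x.1 * ‖X⁻¹‖ ^ x.2)))
        ≤ u ^ (x.1 + x.2) ^ 2 * ((1 + ‖t‖) * (K * K * max ‖X‖ ‖X⁻¹‖ ^ (x.1 + x.2))) := by gcongr
      _ = (1 + ‖t‖) * (K * K) * (u ^ (x.1 + x.2) ^ 2 * max ‖X‖ ‖X⁻¹‖ ^ (x.1 + x.2)) := by ring
      _ ≤ (1 + ‖t‖) * (K * K) * (D * (1 / 2) ^ (x.1 + x.2)) :=
        mul_le_mul_of_nonneg_left (hD _) (by positivity)
      _ = _ := by ring
  have h1 : ∑' x, f x = ∑' m : ℕ, (u : ℂ) ^ m ^ 2 * ((1 - t * q ^ m) * rogersR q t m X) := by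
    have h := (HasAntidiagonal.sigmaAntidiagonalEquivProd.hasSum_iff.2 hf.hasSum).sigma
      (fun m => hasSum_fintype _)
    rw [← h.tsum_eq]
    refine tsum_congr fun m => ?_
    rw [rogersR, mul_sum, mul_sum, ← sum_coe_sort (antidiagonal m)]
    refine sum_congr rfl fun x _ => ?_
    simp only [Function.comp, HasAntidiagonal.sigmaAntidiagonalEquivProd_apply, f]
    rw [mem_antidiagonal.1 x.2]
  have h2 : ∑' x, f x = ∑' k : ℤ, ∑' l : ℕ, f (diffMinEquiv (k, l)) := by
    rw [← diffMinEquiv.tsum_eq f]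
    exact (diffMinEquiv.summable_iff.2 hf).tsum_prod
  rw [← h1, h2, ← tsum_mul_left]
  refine tsum_congr fun k => ?_
  rw [← tsum_thetaTerm hq t k.natAbs, mul_comm, ← tsum_mul_left]
  refine tsum_congr fun l => ?_
  have hu' : (u : ℂ) ≠ 0 := by exact_mod_cast hu0.ne'
  simp only [f, diffMinEquiv, Equiv.coe_fn_mk, thetaTerm]
  rcases Int.eq_nat_or_neg k with ⟨m, rfl | rfl⟩
  · have hX' : X ^ l * X⁻¹ ^ l = 1 := by rw [← mul_pow, mul_inv_cancel₀ hX, one_pow]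
    simp only [Int.toNat_natCast, Int.toNat_neg_natCast, Int.natAbs_natCast, add_zero, zpow_natCast]
    rw [show ((m : ℤ) ^ 2) = ((m ^ 2 : ℕ) : ℤ) by push_cast; rfl, zpow_natCast,
      show (l + m + l) ^ 2 = m ^ 2 + 4 * (l ^ 2 + m * l) by ring,
      show l + m + l = m + 2 * l by ring, pow_add (u : ℂ), pow_mul (u : ℂ), pow_add X]
    linear_combination (u : ℂ) ^ m ^ 2 * q ^ (l ^ 2 + m * l) * (1 - t * q ^ (m + 2 * l)) *
      qbin q t l * qbin q t (l + m) * X ^ m * hX'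
  · have hX' : X ^ l * X⁻¹ ^ l = 1 := by rw [← mul_pow, mul_inv_cancel₀ hX, one_pow]
    simp only [neg_neg, Int.toNat_natCast, Int.toNat_neg_natCast, Int.natAbs_neg,
      Int.natAbs_natCast, add_zero, zpow_neg, zpow_natCast]
    rw [show ((-(m : ℤ)) ^ 2) = ((m ^ 2 : ℕ) : ℤ) by push_cast; ring, zpow_natCast,
      show (l + (l + m)) ^ 2 = m ^ 2 + 4 * (l ^ 2 + m * l) by ring,
      show l + (l + m) = m + 2 * l by ring, pow_add (u : ℂ), pow_mul (u : ℂ), pow_add X⁻¹,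
      ← inv_pow]
    linear_combination (u : ℂ) ^ m ^ 2 * q ^ (l ^ 2 + m * l) * (1 - t * q ^ (m + 2 * l)) *
      qbin q t l * qbin q t (l + m) * X⁻¹ ^ m * hX'

lemma hasSum_of_shift {g P Q : ℕ → ℂ} (hP : Summable P) (hQ : Summable Q) (h0 : g 0 = P 0)
    (h : ∀ m, g (m + 1) = P (m + 1) + Q m) : HasSum g (∑' m, P m + ∑' m, Q m) := by
  rw [← hasSum_nat_add_iff' 1, sum_range_one, h0, hP.tsum_eq_zero_add,
    show P 0 + ∑' m, P (m + 1) + ∑' m, Q m - P 0 = ∑' m, P (m + 1) + ∑' m, Q m by ring]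
  simp only [h]
  exact ((summable_nat_add_iff 1).2 hP).hasSum.add hQ.hasSum

/-- The summand, in the summation index `m`, of the spherical series evaluated at `q^{-n/2} s⁻¹`,
with `q = u⁴` and `t = s²`, up to a factor independent of `m`. -/
def sphTerm (u s X : ℂ) (n m : ℕ) : ℂ :=
  u ^ m ^ 2 * ((1 - s ^ 2 * (u ^ 4) ^ m) * rogersR (u ^ 4) (s ^ 2) n ((u ^ 2) ^ m * s) *
    rogersR (u ^ 4) (s ^ 2) m X)

lemma norm_ofReal_pow_lt_one {u : ℝ} (hu0 : 0 < u) (hu1 : u < 1) {k : ℕ} (hk : k ≠ 0) :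
    ‖(u : ℂ) ^ k‖ < 1 := by
  rw [norm_pow, Complex.norm_of_nonneg hu0.le]
  exact pow_lt_one₀ hu0.le hu1 hk

lemma expBounded_rogersR_node {u s : ℝ} (hu0 : 0 < u) (hu1 : u < 1) (hs0 : 0 < s) (hs1 : s < 1)
    (n : ℕ) :
    ExpBounded fun m => rogersR ((u : ℂ) ^ 4) ((s : ℂ) ^ 2) n (((u : ℂ) ^ 2) ^ m * s) := by
  have h := expBounded_rogersR_geom (norm_ofReal_pow_lt_one hu0 hu1 four_ne_zero) ((s : ℂ) ^ 2) n
    (p := u ^ 2) (by positivity) (pow_lt_one₀ hu0.le hu1 two_ne_zero) hs0 hs1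
  simpa only [Complex.ofReal_pow] using h

lemma summable_sphTerm {u s : ℝ} (hu0 : 0 < u) (hu1 : u < 1) (hs0 : 0 < s) (hs1 : s < 1) (X : ℂ)
    (n : ℕ) : Summable (sphTerm u s X n) := by
  have hq := norm_ofReal_pow_lt_one hu0 hu1 four_ne_zero
  exact (((expBounded_one_sub hq _).mul (expBounded_rogersR_node hu0 hu1 hs0 hs1 n)).mul
    (expBounded_rogersR hq _ X)).summable hu0.le hu1

/-- Multiplication of the spherical series by `X + X⁻¹`, in terms of the node variable. -/
lemma mul_tsum_sphTerm {u s : ℝ} (hu0 : 0 < u) (hu1 : u < 1) (hs0 : 0 < s) (hs1 : s < 1) {X : ℂ}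
    (hX : X ≠ 0) (n : ℕ) :
    ((u : ℂ) ^ 2) ^ n * s * (X + X⁻¹) * ∑' m, sphTerm u s X n m =
      ∑' m : ℕ, (u : ℂ) ^ m ^ 2 * u * (1 - (s : ℂ) ^ 2 * ((u : ℂ) ^ 4) ^ m) *
        ((((u : ℂ) ^ 2) ^ m * s + (((u : ℂ) ^ 2) ^ m * s)⁻¹) *
            rogersR ((u : ℂ) ^ 4) ((s : ℂ) ^ 2) n (((u : ℂ) ^ 2) ^ m * s) -
          (1 - ((u : ℂ) ^ 4) ^ (n + 1)) *
            rogersR ((u : ℂ) ^ 4) ((s : ℂ) ^ 2) (n + 1) (((u : ℂ) ^ 2) ^ m * s)) *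
        rogersR ((u : ℂ) ^ 4) ((s : ℂ) ^ 2) m X := by
  have hq := norm_ofReal_pow_lt_one hu0 hu1 four_ne_zero
  have hq' := one_sub_pow_succ_ne_zero hq
  have hu : (u : ℂ) ≠ 0 := by exact_mod_cast hu0.ne'
  have hs : (s : ℂ) ≠ 0 := by exact_mod_cast hs0.ne'
  have hnode := expBounded_rogersR_node hu0 hu1 hs0 hs1 n
  have hR := expBounded_rogersR hq ((s : ℂ) ^ 2) X
  have hexp : ExpBounded fun m => (u : ℂ) ^ (2 * m + 1) :=
    ⟨u, u ^ 2, hu0.le, by positivity, fun m => by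
      rw [norm_pow, Complex.norm_of_nonneg hu0.le, pow_succ, pow_mul, mul_comm]⟩
  have hP := ((hnode.mul (expBounded_one_sub hq 1).shift).mul hR.shift).summable hu0.le hu1
  have hQ := (((hexp.mul hnode.shift).mul (expBounded_one_sub hq (((s : ℂ) ^ 2) ^ 2))).mul
    hR).summable hu0.le hu1
  have hpieri := pieri_succ ((s : ℂ) ^ 2) hq' hX
  have hpieri0 := pieri_zero ((s : ℂ) ^ 2) hq' X
  have hdiff : ∀ m : ℕ, _ := fun m => twisted_difference_eq (p := (u : ℂ) ^ 2)
    (pow_ne_zero 2 hu) ((s : ℂ) ^ 2) (by simpa only [← pow_mul] using hq')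
    (mul_ne_zero (pow_ne_zero m (pow_ne_zero 2 hu)) hs) n
  rw [show ((u : ℂ) ^ 2) ^ 2 = (u : ℂ) ^ 4 by ring] at hdiff
  generalize (s : ℂ) = s at *
  generalize (u : ℂ) = u at *
  generalize hr : rogersR (u ^ 4) (s ^ 2) = r at *
  have hsumL := (hasSum_of_shift (g := fun m => (X + X⁻¹) * sphTerm u s X n m) hP hQ
    (by
      simp only [sphTerm, hr]
      simp
      linear_combination -(r n s) * hpieri0)
    (fun m => by
      simp only [sphTerm, hr]
      have := hpieri m
      linear_combination (-u ^ (m + 1) ^ 2 * r n ((u ^ 2) ^ (m + 1) * s)) * this)).tsum_eq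
  rw [tsum_mul_left] at hsumL
  rw [mul_assoc _ (X + X⁻¹), hsumL, add_comm, mul_add, ← tsum_mul_left, ← tsum_mul_left]
  refine (hasSum_of_shift (hQ.mul_left _) (hP.mul_left _) ?_ fun m => ?_).tsum_eq.symm
  · have h := hdiff 0
    have hss := mul_inv_cancel₀ hs
    refine mul_left_cancel₀ hs ?_
    simp only [pow_zero, one_mul, mul_one, zero_add, mul_zero, pow_one, ne_eq, OfNat.ofNat_ne_zero,
      not_false_eq_true, zero_pow] at h ⊢
    linear_combination (-u * r 0 X) * h + u * (1 - s ^ 2) * r n s * r 0 X * hss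
  · have h := hdiff (m + 1)
    have hY : (u ^ 2) ^ (m + 1) * s ≠ 0 := mul_ne_zero (pow_ne_zero _ (pow_ne_zero 2 hu)) hs
    have hYY := mul_inv_cancel₀ hY
    have e : (u ^ 2) ^ (m + 1) * s / u ^ 2 = (u ^ 2) ^ m * s := by
      rw [pow_succ]
      field_simp
    rw [e, show u ^ 2 * ((u ^ 2) ^ (m + 1) * s) = (u ^ 2) ^ (m + 1 + 1) * s by ring] at h
    refine mul_left_cancel₀ hY ?_
    linear_combination (-u ^ (m + 1) ^ 2 * u * r (m + 1) X) * h +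
      u ^ (m + 1) ^ 2 * u * (1 - s ^ 2 * (u ^ 4) ^ (m + 1)) * r n ((u ^ 2) ^ (m + 1) * s) *
        r (m + 1) X * hYY

lemma sphTerm_recurrence_zero {u s : ℝ} (hu0 : 0 < u) (hu1 : u < 1) (hs0 : 0 < s) (hs1 : s < 1)
    {X : ℂ} (hX : X ≠ 0) :
    (1 - (s : ℂ) ^ 2) * (s * (X + X⁻¹) * ∑' m, sphTerm u s X 0 m) =
      u * (s : ℂ) ^ 2 * (1 - (u : ℂ) ^ 4) * ∑' m, sphTerm u s X 1 m := by
  have hq := norm_ofReal_pow_lt_one hu0 hu1 four_ne_zero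
  have h := mul_tsum_sphTerm hu0 hu1 hs0 hs1 hX 0
  rw [pow_zero, one_mul] at h
  rw [h, ← tsum_mul_left, ← tsum_mul_left]
  refine tsum_congr fun m => ?_
  have := pieri_zero ((s : ℂ) ^ 2) (one_sub_pow_succ_ne_zero hq) (((u : ℂ) ^ 2) ^ m * s)
  rw [sphTerm]
  linear_combination (-(u : ℂ) ^ m ^ 2 * u * (1 - (s : ℂ) ^ 2 * ((u : ℂ) ^ 4) ^ m) *
    rogersR ((u : ℂ) ^ 4) ((s : ℂ) ^ 2) m X) * this

lemma sphTerm_recurrence_succ {u s : ℝ} (hu0 : 0 < u) (hu1 : u < 1) (hs0 : 0 < s) (hs1 : s < 1)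
    {X : ℂ} (hX : X ≠ 0) (n : ℕ) :
    (1 - (s : ℂ) ^ 2 * ((u : ℂ) ^ 4) ^ (n + 1)) *
        (((u : ℂ) ^ 2) ^ (n + 1) * s * (X + X⁻¹) * ∑' m, sphTerm u s X (n + 1) m) =
      u * (s : ℂ) ^ 2 * ((u : ℂ) ^ 4) ^ (n + 1) * (1 - ((u : ℂ) ^ 4) ^ (n + 2)) *
          ∑' m, sphTerm u s X (n + 2) m +
        u * (1 - ((s : ℂ) ^ 2) ^ 2 * ((u : ℂ) ^ 4) ^ n) * ∑' m, sphTerm u s X n m := by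
  have hq := norm_ofReal_pow_lt_one hu0 hu1 four_ne_zero
  have hu : (u : ℂ) ≠ 0 := by exact_mod_cast hu0.ne'
  have hs : (s : ℂ) ≠ 0 := by exact_mod_cast hs0.ne'
  rw [mul_tsum_sphTerm hu0 hu1 hs0 hs1 hX (n + 1), ← tsum_mul_left, ← tsum_mul_left,
    ← tsum_mul_left, ← ((summable_sphTerm hu0 hu1 hs0 hs1 X (n + 2)).mul_left _).tsum_add
      ((summable_sphTerm hu0 hu1 hs0 hs1 X n).mul_left _)]
  refine tsum_congr fun m => ?_
  have := pieri_succ ((s : ℂ) ^ 2) (one_sub_pow_succ_ne_zero hq)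
    (mul_ne_zero (pow_ne_zero m (pow_ne_zero 2 hu)) hs) n
  rw [sphTerm, sphTerm]
  linear_combination (-(u : ℂ) ^ m ^ 2 * u * (1 - (s : ℂ) ^ 2 * ((u : ℂ) ^ 4) ^ m) *
    rogersR ((u : ℂ) ^ 4) ((s : ℂ) ^ 2) m X) * this

lemma tsum_sphTerm {u s : ℝ} (hu0 : 0 < u) (hu1 : u < 1) (hs0 : 0 < s) (hs1 : s < 1) {X : ℂ}
    (hX : X ≠ 0) (n : ℕ) :
    (u : ℂ) ^ n ^ 2 * (s : ℂ) ^ n * ∑' m, sphTerm u s X n m =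
      ((1 - (s : ℂ) ^ 2) * ∏' j : ℕ, (1 - (s : ℂ) ^ 2 * ((u : ℂ) ^ 4) ^ (j + 1)) /
        (1 - ((u : ℂ) ^ 4) ^ (j + 1))) * (∑' k : ℤ, (u : ℂ) ^ (k ^ 2) * X ^ k) *
        rogersR ((u : ℂ) ^ 4) ((s : ℂ) ^ 2) n X := by
  have hq := one_sub_pow_succ_ne_zero (norm_ofReal_pow_lt_one hu0 hu1 four_ne_zero)
  have hu : (u : ℂ) ≠ 0 := by exact_mod_cast hu0.ne'
  have hs : (s : ℂ) ≠ 0 := by exact_mod_cast hs0.ne'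
  have h0 : ∑' m, sphTerm u s X 0 m = _ :=
    Eq.trans (by simp only [sphTerm, rogersR_zero, mul_one])
      (theta_expansion hu0 hu1 ((s : ℂ) ^ 2) hX)
  generalize (1 - (s : ℂ) ^ 2) * ∏' j : ℕ, (1 - (s : ℂ) ^ 2 * ((u : ℂ) ^ 4) ^ (j + 1)) /
    (1 - ((u : ℂ) ^ 4) ^ (j + 1)) = L at *
  generalize ∑' k : ℤ, (u : ℂ) ^ (k ^ 2) * X ^ k = θ at *
  induction n using Nat.twoStepInduction with
  | zero => simp [h0, rogersR_zero]
  | one =>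
    have h := sphTerm_recurrence_zero hu0 hu1 hs0 hs1 hX
    have hp := pieri_zero ((s : ℂ) ^ 2) hq X
    have hq0 := hq 0
    rw [zero_add, pow_one] at hq0
    refine mul_left_cancel₀ (mul_ne_zero hq0 hs) ?_
    rw [h0] at h
    rw [rogersR_zero] at hp
    linear_combination -h - s * L * θ * hp
  | more n ih0 ih1 =>
    have h := sphTerm_recurrence_succ hu0 hu1 hs0 hs1 hX n
    have hp := pieri_succ ((s : ℂ) ^ 2) hq hX n
    refine mul_left_cancel₀ (mul_ne_zero hu (hq (n + 1))) ?_
    linear_combination (-(u : ℂ) ^ n ^ 2 * (s : ℂ) ^ n) * h -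
      u * (1 - ((s : ℂ) ^ 2) ^ 2 * ((u : ℂ) ^ 4) ^ n) * ih0 +
      u * (1 - (s : ℂ) ^ 2 * ((u : ℂ) ^ 4) ^ (n + 1)) * (X + X⁻¹) * ih1 - u * L * θ * hp

/-- Quasi-periodicity of the theta function. -/
lemma theta_shift {u s : ℂ} (hu : u ≠ 0) (hs : s ≠ 0) (n : ℕ) :
    u ^ n ^ 2 * s ^ n * ∑' k : ℤ, u ^ (k ^ 2) * ((u ^ 2) ^ n * s)⁻¹ ^ k =
      ∑' k : ℤ, u ^ (k ^ 2) * s ^ k := by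
  rw [← (Equiv.subLeft (n : ℤ)).tsum_eq (fun k : ℤ => u ^ (k ^ 2) * ((u ^ 2) ^ n * s)⁻¹ ^ k),
    ← tsum_mul_left]
  refine tsum_congr fun k => ?_
  simp only [Equiv.subLeft_apply]
  rw [inv_zpow', neg_sub, mul_zpow, ← pow_mul, ← zpow_natCast u (2 * n), ← zpow_mul,
    ← zpow_natCast u (n ^ 2), ← zpow_natCast s n]
  calc _ = (u ^ ((n ^ 2 : ℕ) : ℤ) * u ^ (((n : ℤ) - k) ^ 2) * u ^ (((2 * n : ℕ) : ℤ) * (k - n))) *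
        (s ^ (n : ℤ) * s ^ (k - n)) := by ring
    _ = _ := by
      rw [← zpow_add₀ hu, ← zpow_add₀ hu, ← zpow_add₀ hs]
      congr 2
      · push_cast; ring
      · ring

lemma prod_eq_qbin {q t : ℂ} (hq : ∀ i : ℕ, 1 - q ^ (i + 1) ≠ 0)
    (ht : ∀ i : ℕ, 1 - t ^ 2 * q ^ i ≠ 0) (m : ℕ) :
    (1 - t) * qbin q (t ^ 2) m * (∏ i ∈ range m, ((1 - t * q ^ i) * (1 - t * q ^ (i + 1))) /
      ((1 - t ^ 2 * q ^ i) * (1 - q ^ (i + 1)))) = (1 - t * q ^ m) * qbin q t m ^ 2 := by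
  induction m with
  | zero => simp [qbin_zero]
  | succ m ih =>
    rw [prod_range_succ]
    have h1 := qbin_succ t hq m
    have h2 := qbin_succ (t ^ 2) hq m
    have hqm := hq m
    have htm := ht m
    generalize (∏ i ∈ range m, ((1 - t * q ^ i) * (1 - t * q ^ (i + 1))) /
      ((1 - t ^ 2 * q ^ i) * (1 - q ^ (i + 1)))) = P at *
    rw [← mul_assoc, mul_div_assoc', div_eq_iff (mul_ne_zero htm hqm)]
    refine mul_left_cancel₀ hqm ?_
    linear_combination (1 - t) * P * (1 - t * q ^ m) * (1 - t * q ^ (m + 1)) * h2 +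
      (1 - t ^ 2 * q ^ m) * (1 - t * q ^ m) * (1 - t * q ^ (m + 1)) * ih -
      (1 - t ^ 2 * q ^ m) * (1 - t * q ^ (m + 1)) *
        ((1 - q ^ (m + 1)) * qbin q t (m + 1) + (1 - t * q ^ m) * qbin q t m) * h1

lemma thetaA1_pow_four {u : ℝ} (hu0 : 0 < u) (X : ℂ) :
    thetaA1 (u ^ 4) X = ∑' k : ℤ, (u : ℂ) ^ (k ^ 2) * X ^ k := by
  refine tsum_congr fun k => ?_
  rw [← Real.rpow_natCast, ← Real.rpow_mul hu0.le,
    show ((4 : ℕ) : ℝ) * ((k : ℝ) ^ 2 / 4) = ((k ^ 2 : ℤ) : ℝ) by push_cast; ring,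
    Real.rpow_intCast, Complex.ofReal_zpow]

/-- The spherical function at `q^{-n/2} s⁻¹` in terms of the `R`-normalized polynomials. -/
lemma sphA1_eq {u s : ℝ} (hu0 : 0 < u) (hu1 : u < 1) (hs0 : 0 < s) (hs1 : s < 1) {X : ℂ}
    (hX : X ≠ 0) (n : ℕ) :
    (1 - (s : ℂ) ^ 2) * rogersR ((u : ℂ) ^ 4) ((s : ℂ) ^ 2) n s *
      sphA1 (u ^ 4) s X (((u : ℂ) ^ 2) ^ n * s)⁻¹ = ∑' m, sphTerm u s X n m := by
  have hqn := norm_ofReal_pow_lt_one hu0 hu1 four_ne_zero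
  have hq := one_sub_pow_succ_ne_zero hqn
  have hu : (u : ℂ) ≠ 0 := by exact_mod_cast hu0.ne'
  have hs : (s : ℂ) ≠ 0 := by exact_mod_cast hs0.ne'
  have ht := one_sub_mul_pow_ne_zero hqn (norm_ofReal_pow_lt_one hs0 hs1 two_ne_zero)
  have htt := one_sub_mul_pow_ne_zero hqn (t := ((s : ℂ) ^ 2) ^ 2) (by
    rw [← pow_mul]; exact norm_ofReal_pow_lt_one hs0 hs1 (by norm_num))
  have hYn : ((u : ℂ) ^ 2) ^ n * s ≠ 0 := mul_ne_zero (pow_ne_zero n (pow_ne_zero 2 hu)) hs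
  rw [sphA1, ← tsum_mul_left]
  refine tsum_congr fun m => ?_
  have hpow : (((u ^ 4) ^ ((m : ℝ) ^ 2 / 4) : ℝ) : ℂ) = (u : ℂ) ^ m ^ 2 := by
    rw [← Real.rpow_natCast, ← Real.rpow_mul hu0.le,
      show ((4 : ℕ) : ℝ) * ((m : ℝ) ^ 2 / 4) = ((m ^ 2 : ℕ) : ℝ) by push_cast; ring,
      Real.rpow_natCast, Complex.ofReal_pow]
  have hq' : ∀ i : ℕ, 1 - ((u ^ 4 : ℝ) : ℂ) ^ (i + 1) ≠ 0 := by
    simpa only [Complex.ofReal_pow] using hq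
  have ht' : ∀ i : ℕ, 1 - (s : ℂ) ^ 2 * ((u ^ 4 : ℝ) : ℂ) ^ i ≠ 0 := by
    simpa only [Complex.ofReal_pow] using ht
  have hPX := rogersA1_eq hq' ht' hX m
  have hPL := rogersA1_eq hq' ht' (inv_ne_zero hYn) m
  have hprod := prod_eq_qbin hq htt m
  have hself := rogersR_self hs hq m
  have hdual := duality (pow_ne_zero 2 hu) hs (by simpa only [← pow_mul] using hq) n m
  rw [show ((u : ℂ) ^ 2) ^ 2 = (u : ℂ) ^ 4 by ring, hself] at hdual
  rw [rogersR_inv] at hPL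
  rw [hpow, sphTerm]
  simp only [Complex.ofReal_pow] at hPX hPL ⊢
  have hss : (s : ℂ) ^ m * (s : ℂ)⁻¹ ^ m = 1 := by rw [← mul_pow, mul_inv_cancel₀ hs, one_pow]
  refine mul_left_cancel₀ (qbin_ne_zero hq htt m) ?_
  generalize (∏ i ∈ range m, ((1 - (s : ℂ) ^ 2 * ((u : ℂ) ^ 4) ^ i) *
    (1 - (s : ℂ) ^ 2 * ((u : ℂ) ^ 4) ^ (i + 1))) /
      ((1 - ((s : ℂ) ^ 2) ^ 2 * ((u : ℂ) ^ 4) ^ i) * (1 - ((u : ℂ) ^ 4) ^ (i + 1)))) = D at *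
  generalize qbin ((u : ℂ) ^ 4) (((s : ℂ) ^ 2) ^ 2) m = d at *
  generalize qbin ((u : ℂ) ^ 4) ((s : ℂ) ^ 2) m = c at *
  generalize rogersR ((u : ℂ) ^ 4) ((s : ℂ) ^ 2) n s = r at *
  generalize rogersR ((u : ℂ) ^ 4) ((s : ℂ) ^ 2) n (((u : ℂ) ^ 2) ^ m * s) = r' at *
  generalize rogersR ((u : ℂ) ^ 4) ((s : ℂ) ^ 2) m (((u : ℂ) ^ 2) ^ n * s) = r'' at *
  generalize rogersR ((u : ℂ) ^ 4) ((s : ℂ) ^ 2) m X = w at *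
  generalize RogersA1 (u ^ 4) ((s : ℂ) ^ 2) m X = x at *
  generalize RogersA1 (u ^ 4) ((s : ℂ) ^ 2) m (((u : ℂ) ^ 2) ^ n * s)⁻¹ = y at *
  linear_combination r * s ^ m * u ^ m ^ 2 * x * y * hprod +
    r * s ^ m * u ^ m ^ 2 * (1 - (s : ℂ) ^ 2 * ((u : ℂ) ^ 4) ^ m) * (c * y * hPX + w * hPL) -
    s ^ m * u ^ m ^ 2 * (1 - (s : ℂ) ^ 2 * ((u : ℂ) ^ 4) ^ m) * w * hdual +
    u ^ m ^ 2 * (1 - (s : ℂ) ^ 2 * ((u : ℂ) ^ 4) ^ m) * w * r' * d * hss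

end QTShintani

/-- the q,t-Shintani (evaluation) formula of type A₁ at Λ₀ = q^{-n/2} s⁻¹. -/
theorem qt_shintani_A1 (q s : ℝ) (hq0 : 0 < q) (hq1 : q < 1)
    (hs0 : 0 < s) (hs1 : s < 1) (n : ℕ) (X : ℂ) (hX : X ≠ 0) :
    thetaA1 q (s : ℂ) *
      sphA1 q s X (((q ^ (-(n : ℝ) / 2) : ℝ) : ℂ) * (s : ℂ)⁻¹) =
    thetaA1 q X * thetaA1 q (((q ^ (-(n : ℝ) / 2) : ℝ) : ℂ) * (s : ℂ)⁻¹) *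
      (RogersA1 q ((s : ℂ) ^ 2) n X / RogersA1 q ((s : ℂ) ^ 2) n (s : ℂ)) *
      ∏' j : ℕ, (1 - (s : ℂ) ^ 2 * (q : ℂ) ^ (j + 1)) / (1 - (q : ℂ) ^ (j + 1)) := by
  obtain ⟨u, hu0, hu1, rfl⟩ : ∃ u : ℝ, 0 < u ∧ u < 1 ∧ q = u ^ 4 := by
    refine ⟨q ^ (1 / 4 : ℝ), Real.rpow_pos_of_pos hq0 _,
      Real.rpow_lt_one hq0.le hq1 (by norm_num), ?_⟩
    rw [← Real.rpow_natCast, ← Real.rpow_mul hq0.le]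
    norm_num
  have hu : (u : ℂ) ≠ 0 := by exact_mod_cast hu0.ne'
  have hs : (s : ℂ) ≠ 0 := by exact_mod_cast hs0.ne'
  have hqn := QTShintani.norm_ofReal_pow_lt_one hu0 hu1 four_ne_zero
  have hq := QTShintani.one_sub_pow_succ_ne_zero hqn
  have ht := QTShintani.one_sub_mul_pow_ne_zero hqn
    (QTShintani.norm_ofReal_pow_lt_one hs0 hs1 two_ne_zero)
  have htt := QTShintani.one_sub_mul_pow_ne_zero hqn (t := ((s : ℂ) ^ 2) ^ 2) (by
    rw [← pow_mul]; exact QTShintani.norm_ofReal_pow_lt_one hs0 hs1 (by norm_num))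
  have hΛ : (((u ^ 4) ^ (-(n : ℝ) / 2) : ℝ) : ℂ) * (s : ℂ)⁻¹ = (((u : ℂ) ^ 2) ^ n * s)⁻¹ := by
    rw [mul_inv, ← Real.rpow_natCast, ← Real.rpow_mul hu0.le,
      show ((4 : ℕ) : ℝ) * (-(n : ℝ) / 2) = -((2 * n : ℕ) : ℝ) by push_cast; ring,
      Real.rpow_neg hu0.le, Real.rpow_natCast, ← pow_mul, Complex.ofReal_inv, Complex.ofReal_pow]
  have hq' : ∀ i : ℕ, 1 - ((u ^ 4 : ℝ) : ℂ) ^ (i + 1) ≠ 0 := by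
    simpa only [Complex.ofReal_pow] using hq
  have ht' : ∀ i : ℕ, 1 - (s : ℂ) ^ 2 * ((u ^ 4 : ℝ) : ℂ) ^ i ≠ 0 := by
    simpa only [Complex.ofReal_pow] using ht
  have hratio : RogersA1 (u ^ 4) ((s : ℂ) ^ 2) n X / RogersA1 (u ^ 4) ((s : ℂ) ^ 2) n s =
      QTShintani.rogersR ((u : ℂ) ^ 4) ((s : ℂ) ^ 2) n X /
        QTShintani.rogersR ((u : ℂ) ^ 4) ((s : ℂ) ^ 2) n s := by
    rw [← Complex.ofReal_pow u 4, ← QTShintani.rogersA1_eq hq' ht' hX,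
      ← QTShintani.rogersA1_eq hq' ht' hs, mul_div_mul_left _ _ (QTShintani.qbin_ne_zero hq' ht' n)]
  have hR : QTShintani.rogersR ((u : ℂ) ^ 4) ((s : ℂ) ^ 2) n s ≠ 0 := by
    rw [QTShintani.rogersR_self hs hq]
    exact mul_ne_zero (pow_ne_zero _ (inv_ne_zero hs)) (QTShintani.qbin_ne_zero hq htt n)
  have ht1 : 1 - (s : ℂ) ^ 2 ≠ 0 := by simpa using ht 0
  have hsph := QTShintani.sphA1_eq hu0 hu1 hs0 hs1 hX n
  have hsum := QTShintani.tsum_sphTerm hu0 hu1 hs0 hs1 hX n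
  rw [← hsph] at hsum
  rw [hΛ, hratio, QTShintani.thetaA1_pow_four hu0, QTShintani.thetaA1_pow_four hu0,
    QTShintani.thetaA1_pow_four hu0, ← QTShintani.theta_shift hu hs n, Complex.ofReal_pow,
    mul_div_assoc', div_mul_eq_mul_div, eq_div_iff hR]
  refine mul_left_cancel₀ ht1 ?_
  linear_combination (∑' k : ℤ, (u : ℂ) ^ (k ^ 2) * (((u : ℂ) ^ 2) ^ n * s)⁻¹ ^ k) * hsum

end
end

section
/- Fix a real number q with 0 < q < 1. For all Λ, Λ′ ∈ ℂ with Λ ≠ 0 and Λ′ ≠ 0, the global q-Whittaker function of type A₁ is invariant under the q-Fourier–Jackson transform: ∑_{n=0}^∞ q^{n²/2} Λⁿ Ψ̃(q^{−n/2}, Λ′) / ∏_{j=1}^n (1 − qʲ) = θ(Λ′) · Ψ̃(Λ, Λ′) / ∏_{j=1}^∞ (1 − qʲ), the series on the left converging absolutely. (The Jackson–Gauss integral formula (4.64) of the paper in the rank-one case.) -/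
open scoped BigOperators
open Filter

noncomputable section

/-- The finite `q`-Pochhammer symbol `(q; q)_n`. -/
def qFactor (q : ℂ) (n : ℕ) : ℂ := ∏ j ∈ Finset.Icc 1 n, (1 - q ^ j)

@[simp]
lemma qFactor_zero (q : ℂ) : qFactor q 0 = 1 := by simp [qFactor]

lemma qFactor_succ (q : ℂ) (n : ℕ) : qFactor q (n + 1) = qFactor q n * (1 - q ^ (n + 1)) := by
  simp [qFactor, Finset.prod_Icc_succ_top]

lemma qFactor_eq_prod_range (q : ℂ) (n : ℕ) :
    qFactor q n = ∏ j ∈ Finset.range n, (1 - q ^ (j + 1)) := by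
  induction n with
  | zero => simp
  | succ n ih => rw [qFactor_succ, ih, Finset.prod_range_succ]

lemma one_sub_pow_succ_ne_zero {q : ℂ} (hq : ‖q‖ < 1) (n : ℕ) : 1 - q ^ (n + 1) ≠ 0 := by
  intro h
  have h1 : ‖q ^ (n + 1)‖ = 1 := by rw [← sub_eq_zero.mp h, norm_one]
  rw [norm_pow] at h1
  exact (pow_lt_one₀ (norm_nonneg q) hq n.succ_ne_zero).ne h1

lemma qFactor_ne_zero {q : ℂ} (hq : ‖q‖ < 1) (n : ℕ) : qFactor q n ≠ 0 := by
  rw [qFactor_eq_prod_range]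
  exact Finset.prod_ne_zero_iff.mpr fun j _ => one_sub_pow_succ_ne_zero hq j

lemma tendsto_qFactor_inv {q : ℂ} (hq : ‖q‖ < 1) :
    Tendsto (fun n => (qFactor q n)⁻¹) atTop (nhds (∏' j : ℕ, (1 - q ^ (j + 1)))⁻¹) := by
  have hs : Summable fun n : ℕ => ‖-q ^ (n + 1)‖ := by
    simpa using (summable_nat_add_iff 1).mpr (summable_geometric_of_lt_one (norm_nonneg q) hq)
  refine Tendsto.inv₀ ?_ ?_
  · refine Tendsto.congr (fun n => (qFactor_eq_prod_range q n).symm) ?_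
    exact (multipliable_one_add_of_summable hs).hasProd.tendsto_prod_nat
  · exact tprod_one_add_ne_zero_of_summable (f := fun n => -q ^ (n + 1))
      (fun n => one_sub_pow_succ_ne_zero hq n) hs

lemma exists_norm_qFactor_inv_le {q : ℂ} (hq : ‖q‖ < 1) :
    ∃ C, ∀ n, ‖(qFactor q n)⁻¹‖ ≤ C := by
  obtain ⟨C, hC⟩ := (Metric.isBounded_range_of_tendsto _ (tendsto_qFactor_inv hq)).exists_norm_le
  exact ⟨C, fun n => hC _ ⟨n, rfl⟩⟩

/-- The continuous `q`-Hermite polynomial in homogeneous form, divided by `(q; q)_n`. -/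
def qHermite (q x y : ℂ) (n : ℕ) : ℂ :=
  ∑ p ∈ Finset.HasAntidiagonal.antidiagonal n, x ^ p.1 * y ^ p.2 * (qFactor q p.1)⁻¹ * (qFactor q p.2)⁻¹

/-- The sequence `qHermite` shifted by one index. -/
def qHermitePred (q x y : ℂ) : ℕ → ℂ
  | 0 => 0
  | n + 1 => qHermite q x y n

lemma one_sub_mul_qFactor_inv_succ {q : ℂ} (hq : ‖q‖ < 1) (n : ℕ) :
    (1 - q ^ (n + 1)) * (qFactor q (n + 1))⁻¹ = (qFactor q n)⁻¹ := by
  have := one_sub_pow_succ_ne_zero hq n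
  have := qFactor_ne_zero hq n
  rw [qFactor_succ]
  field_simp

lemma sum_antidiagonal_one_sub_pow_fst {q : ℂ} (hq : ‖q‖ < 1) (x y : ℂ) (n : ℕ) :
    ∑ p ∈ Finset.HasAntidiagonal.antidiagonal (n + 1),
      (1 - q ^ p.1) * (x ^ p.1 * y ^ p.2 * (qFactor q p.1)⁻¹ * (qFactor q p.2)⁻¹) =
    x * qHermite q x y n := by
  rw [Finset.Nat.sum_antidiagonal_succ, qHermite, Finset.mul_sum]
  simp only [pow_zero, sub_self, zero_mul, zero_add]
  refine Finset.sum_congr rfl fun p _ => ?_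
  rw [← one_sub_mul_qFactor_inv_succ hq p.1]
  ring

lemma sum_antidiagonal_pow_mul {q : ℂ} (hq : ‖q‖ < 1) (x y : ℂ) (n : ℕ) :
    ∑ p ∈ Finset.HasAntidiagonal.antidiagonal n,
      q ^ p.1 * (x ^ p.1 * y ^ p.2 * (qFactor q p.1)⁻¹ * (qFactor q p.2)⁻¹) =
    qHermite q x y n - x * qHermitePred q x y n := by
  cases n with
  | zero => simp [qHermite, qHermitePred]
  | succ n =>
    rw [qHermitePred, ← sum_antidiagonal_one_sub_pow_fst hq, qHermite, ← Finset.sum_sub_distrib]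
    exact Finset.sum_congr rfl fun p _ => by ring

lemma qHermite_recurrence {q : ℂ} (hq : ‖q‖ < 1) (x y : ℂ) (n : ℕ) :
    (1 - q ^ (n + 1)) * qHermite q x y (n + 1) =
      (x + y) * qHermite q x y n - x * y * qHermitePred q x y n := by
  have key : (1 - q ^ (n + 1)) * qHermite q x y (n + 1) = x * qHermite q x y n +
      ∑ p ∈ Finset.HasAntidiagonal.antidiagonal (n + 1), q ^ p.1 * (1 - q ^ p.2) *
        (x ^ p.1 * y ^ p.2 * (qFactor q p.1)⁻¹ * (qFactor q p.2)⁻¹) := by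
    rw [← sum_antidiagonal_one_sub_pow_fst hq, ← Finset.sum_add_distrib, qHermite, Finset.mul_sum]
    refine Finset.sum_congr rfl fun p hp => ?_
    rw [← Finset.HasAntidiagonal.mem_antidiagonal.mp hp, pow_add]
    ring
  have h2 : ∑ p ∈ Finset.HasAntidiagonal.antidiagonal (n + 1), q ^ p.1 * (1 - q ^ p.2) *
        (x ^ p.1 * y ^ p.2 * (qFactor q p.1)⁻¹ * (qFactor q p.2)⁻¹) =
      y * (qHermite q x y n - x * qHermitePred q x y n) := by
    rw [Finset.Nat.sum_antidiagonal_succ', ← sum_antidiagonal_pow_mul hq, Finset.mul_sum]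
    simp only [pow_zero, sub_self, zero_mul, zero_add, mul_zero]
    refine Finset.sum_congr rfl fun p _ => ?_
    rw [← one_sub_mul_qFactor_inv_succ hq p.2]
    ring
  rw [key, h2]
  ring

lemma sum_range_fold (f : ℕ → ℂ) (n : ℕ) :
    ∑ j ∈ Finset.range (n + 1), f j =
      ∑ j ∈ Finset.range (n / 2 + 1), if n = 2 * j then f j else f j + f (n - j) := by
  obtain ⟨k, rfl | rfl⟩ := Nat.even_or_odd' n
  · have hk : ∑ j ∈ Finset.range k, f (k + 1 + j) = ∑ j ∈ Finset.range k, f (2 * k - j) := by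
      rw [← Finset.sum_range_reflect]
      refine Finset.sum_congr rfl fun j hj => congrArg f ?_
      have := Finset.mem_range.mp hj
      omega
    rw [show 2 * k / 2 = k by omega, show 2 * k + 1 = (k + 1) + k by omega, Finset.sum_range_add,
      hk, Finset.sum_range_succ, Finset.sum_range_succ, if_pos rfl, add_right_comm,
      ← Finset.sum_add_distrib]
    refine congrArg (· + f k) (Finset.sum_congr rfl fun j hj => ?_)
    rw [if_neg]
    have := Finset.mem_range.mp hj
    omega
  · have hk : ∑ j ∈ Finset.range (k + 1), f (k + 1 + j) =
        ∑ j ∈ Finset.range (k + 1), f (2 * k + 1 - j) := by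
      rw [← Finset.sum_range_reflect]
      refine Finset.sum_congr rfl fun j hj => congrArg f ?_
      have := Finset.mem_range.mp hj
      omega
    rw [show (2 * k + 1) / 2 = k by omega, show 2 * k + 1 + 1 = (k + 1) + (k + 1) by omega,
      Finset.sum_range_add, hk, ← Finset.sum_add_distrib]
    refine Finset.sum_congr rfl fun j hj => ?_
    rw [if_neg]
    omega

lemma prod_range_eq_qBinomial {q : ℂ} (hq : ‖q‖ < 1) {n j : ℕ} (hj : j ≤ n) :
    ∏ i ∈ Finset.range j, (1 - q ^ (n - i)) / (1 - q ^ (i + 1)) =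
      qFactor q n * ((qFactor q j)⁻¹ * (qFactor q (n - j))⁻¹) := by
  induction j with
  | zero => simp [qFactor_ne_zero hq n]
  | succ j ih =>
    obtain ⟨m, rfl⟩ := Nat.exists_eq_add_of_le' hj
    have h0 := one_sub_pow_succ_ne_zero hq j
    have h1 := qFactor_ne_zero hq j
    have h2 := qFactor_ne_zero hq m
    have h3 := one_sub_pow_succ_ne_zero hq m
    rw [Finset.prod_range_succ, ih (by omega), show m + (j + 1) - j = m + 1 by omega,
      show m + (j + 1) - (j + 1) = m by omega, qFactor_succ, qFactor_succ]
    field_simp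

lemma PbarA1_eq_qHermite {q : ℝ} (hq : ‖(q : ℂ)‖ < 1) (n : ℕ) {X : ℂ} (hX : X ≠ 0) :
    PbarA1 q n X = qFactor q n * qHermite q X X⁻¹ n := by
  have hP : PbarA1 q n X = ∑ j ∈ Finset.range (n / 2 + 1),
      (∏ i ∈ Finset.range j, (1 - (q : ℂ) ^ (n - i)) / (1 - (q : ℂ) ^ (i + 1))) *
        Msym (n - 2 * j) X := by
    have hI : Finset.Icc 1 (n / 2) = Finset.Ico (0 + 1) (n / 2 + 1) := rfl
    rw [Finset.range_eq_Ico, Finset.sum_eq_sum_Ico_succ_bot (Nat.succ_pos _), PbarA1, hI]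
    simp
  rw [hP, qHermite, Finset.Nat.sum_antidiagonal_eq_sum_range_succ_mk, Finset.mul_sum]
  refine Eq.trans ?_ (sum_range_fold _ n).symm
  refine Finset.sum_congr rfl fun j hj => ?_
  have hj2 : 2 * j ≤ n := by
    have := Finset.mem_range.mp hj
    omega
  obtain ⟨d, rfl⟩ := Nat.exists_eq_add_of_le hj2
  rw [prod_range_eq_qBinomial hq (by omega)]
  simp only [show 2 * j + d - 2 * j = d by omega, show 2 * j + d - j = j + d by omega,
    show 2 * j + d - (j + d) = j by omega]
  have hXj : X ^ j * X⁻¹ ^ j = 1 := by rw [← mul_pow, mul_inv_cancel₀ hX, one_pow]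
  split_ifs with h
  · obtain rfl : d = 0 := by omega
    simp only [Msym, if_true, add_zero, hXj]
    ring
  · have hd : d ≠ 0 := by omega
    simp only [Msym, if_neg hd, pow_add]
    linear_combination (-(qFactor q (2 * j + d)) * (qFactor q j)⁻¹ * (qFactor q (j + d))⁻¹ *
      (X ^ d + X⁻¹ ^ d)) * hXj

lemma exists_norm_qHermite_le {q : ℂ} (hq : ‖q‖ < 1) (x y : ℂ) :
    ∃ B, 0 ≤ B ∧ ∀ n, ‖qHermite q x y n‖ ≤ B ^ n := by
  have hq' : 0 < 1 - ‖q‖ := sub_pos.mpr hq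
  set B := (‖x + y‖ + ‖x * y‖ + 1) / (1 - ‖q‖) with hB
  have hB1 : 1 ≤ B := by
    rw [hB, le_div_iff₀ hq']
    linarith [norm_nonneg q, norm_nonneg (x + y), norm_nonneg (x * y)]
  have hBmul : B * (1 - ‖q‖) = ‖x + y‖ + ‖x * y‖ + 1 := div_mul_cancel₀ _ hq'.ne'
  have hB0 : 0 ≤ B := zero_le_one.trans hB1
  have key : ∀ n, ‖qHermite q x y n‖ ≤ B ^ n ∧ ‖qHermitePred q x y n‖ ≤ B ^ n := by
    intro n
    induction n with
    | zero => simp [qHermite, qHermitePred]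
    | succ n ih =>
      obtain ⟨ih1, ih2⟩ := ih
      refine ⟨?_, ih1.trans (pow_le_pow_right₀ hB1 n.le_succ)⟩
      have hlow : 1 - ‖q‖ ≤ ‖1 - q ^ (n + 1)‖ := by
        have h1 : ‖q ^ (n + 1)‖ ≤ ‖q‖ := by
          rw [norm_pow]
          exact pow_le_of_le_one (norm_nonneg q) hq.le n.succ_ne_zero
        have h2 := norm_sub_norm_le 1 (q ^ (n + 1))
        rw [norm_one] at h2
        linarith
      have hup : ‖1 - q ^ (n + 1)‖ * ‖qHermite q x y (n + 1)‖ ≤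
          ‖x + y‖ * B ^ n + ‖x * y‖ * B ^ n := by
        rw [← norm_mul, qHermite_recurrence hq]
        refine (norm_sub_le _ _).trans ?_
        rw [norm_mul, norm_mul (x * y)]
        gcongr
      have hBn : 0 ≤ B ^ n := pow_nonneg hB0 n
      refine le_of_mul_le_mul_left ?_ hq'
      calc (1 - ‖q‖) * ‖qHermite q x y (n + 1)‖
          ≤ ‖1 - q ^ (n + 1)‖ * ‖qHermite q x y (n + 1)‖ := by gcongr
        _ ≤ ‖x + y‖ * B ^ n + ‖x * y‖ * B ^ n := hup
        _ ≤ (B * (1 - ‖q‖)) * B ^ n := by rw [hBmul]; linarith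
        _ = (1 - ‖q‖) * B ^ (n + 1) := by ring
  exact ⟨B, hB0, fun n => (key n).1⟩

/-- The summand of Cauchy's series for `1 / (q; q)_∞`. -/
def cauchyTerm (q : ℂ) (k b : ℕ) : ℂ :=
  q ^ (b * (b + k)) * (qFactor q b)⁻¹ * (qFactor q (b + k))⁻¹

lemma norm_cauchyTerm_le {q : ℂ} {C : ℝ} (hC : ∀ n, ‖(qFactor q n)⁻¹‖ ≤ C) (k b : ℕ) :
    ‖cauchyTerm q k b‖ ≤ C * C * ‖q‖ ^ (b * (b + k)) := by
  have hC0 : 0 ≤ C := (norm_nonneg _).trans (hC 0)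
  rw [cauchyTerm, norm_mul, norm_mul, norm_pow, mul_assoc, mul_comm]
  gcongr
  · exact hC b
  · exact hC (b + k)

lemma norm_cauchyTerm_le_geometric {q : ℂ} (hq : ‖q‖ < 1) {C : ℝ}
    (hC : ∀ n, ‖(qFactor q n)⁻¹‖ ≤ C) (k b : ℕ) :
    ‖cauchyTerm q k b‖ ≤ C * C * ‖q‖ ^ b := by
  have hC0 : 0 ≤ C := (norm_nonneg _).trans (hC 0)
  refine (norm_cauchyTerm_le hC k b).trans ?_
  refine mul_le_mul_of_nonneg_left (pow_le_pow_of_le_one (norm_nonneg q) hq.le ?_) (by positivity)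
  nlinarith [Nat.zero_le (b * k), Nat.le_mul_self b]

lemma summable_cauchyTerm {q : ℂ} (hq : ‖q‖ < 1) (k : ℕ) : Summable (cauchyTerm q k) := by
  obtain ⟨C, hC⟩ := exists_norm_qFactor_inv_le hq
  exact ((summable_geometric_of_lt_one (norm_nonneg q) hq).mul_left (C * C)).of_norm_bounded
    (norm_cauchyTerm_le_geometric hq hC k)

lemma cauchyTerm_sub_cauchyTerm_succ {q : ℂ} (hq : ‖q‖ < 1) (k b : ℕ) :
    cauchyTerm q k b - cauchyTerm q (k + 1) b =
      (1 - q ^ b) * cauchyTerm q k b - (1 - q ^ (b + 1)) * cauchyTerm q k (b + 1) := by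
  have h1 := one_sub_mul_qFactor_inv_succ hq b
  have h2 := one_sub_mul_qFactor_inv_succ hq (b + k)
  simp only [cauchyTerm, show b + 1 + k = b + k + 1 by ring, show b + (k + 1) = b + k + 1 by ring,
    ← h2]
  simp only [← h1]
  ring

lemma tsum_cauchyTerm_succ {q : ℂ} (hq : ‖q‖ < 1) (k : ℕ) :
    ∑' b, cauchyTerm q (k + 1) b = ∑' b, cauchyTerm q k b := by
  have hs : Summable fun b => (1 - q ^ b) * cauchyTerm q k b := by
    refine ((summable_cauchyTerm hq k).norm.mul_left 2).of_norm_bounded fun b => ?_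
    rw [norm_mul]
    gcongr
    refine (norm_sub_le _ _).trans ?_
    rw [norm_one, norm_pow]
    linarith [pow_le_one₀ (n := b) (norm_nonneg q) hq.le]
  have h0 := hs.tsum_eq_zero_add
  simp only [pow_zero, sub_self, zero_mul, zero_add] at h0
  have h1 : ∑' b, (cauchyTerm q k b - cauchyTerm q (k + 1) b) = 0 := by
    simp_rw [cauchyTerm_sub_cauchyTerm_succ hq]
    rw [hs.tsum_sub ((summable_nat_add_iff 1).mpr hs), h0, sub_self]
  rw [(summable_cauchyTerm hq k).tsum_sub (summable_cauchyTerm hq (k + 1))] at h1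
  exact (sub_eq_zero.mp h1).symm

/-- Cauchy's identity (Durfee rectangles). -/
lemma tsum_cauchyTerm {q : ℂ} (hq : ‖q‖ < 1) (k : ℕ) :
    ∑' b, cauchyTerm q k b = (∏' j : ℕ, (1 - q ^ (j + 1)))⁻¹ := by
  obtain ⟨C, hC⟩ := exists_norm_qFactor_inv_le hq
  have hC0 : 0 ≤ C := (norm_nonneg _).trans (hC 0)
  have hconst : ∀ m, ∑' b, cauchyTerm q m b = ∑' b, cauchyTerm q 0 b := by
    intro m
    induction m with
    | zero => rfl
    | succ m ih => rw [tsum_cauchyTerm_succ hq, ih]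
  have hlim : Tendsto (fun m => ∑' b, cauchyTerm q m b) atTop
      (nhds (∑' b : ℕ, if b = 0 then (∏' j : ℕ, (1 - q ^ (j + 1)))⁻¹ else 0)) := by
    refine tendsto_tsum_of_dominated_convergence
      ((summable_geometric_of_lt_one (norm_nonneg q) hq).mul_left (C * C)) (fun b => ?_)
      (Eventually.of_forall fun m b => norm_cauchyTerm_le_geometric hq hC m b)
    split_ifs with hb
    · subst hb
      simpa [cauchyTerm] using tendsto_qFactor_inv hq
    · have hg : Tendsto (fun m => C * C * ‖q‖ ^ m) atTop (nhds 0) := by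
        simpa using (tendsto_pow_atTop_nhds_zero_of_lt_one (norm_nonneg q) hq).const_mul (C * C)
      refine squeeze_zero_norm (fun m => (norm_cauchyTerm_le hC m b).trans ?_) hg
      refine mul_le_mul_of_nonneg_left (pow_le_pow_of_le_one (norm_nonneg q) hq.le ?_)
        (by positivity)
      exact (Nat.le_add_left m b).trans (Nat.le_mul_of_pos_left _ (Nat.pos_of_ne_zero hb))
  rw [tsum_ite_eq] at hlim
  simp_rw [hconst] at hlim
  rw [hconst, tendsto_nhds_unique hlim tendsto_const_nhds]

/-- The Gaussian weight `q^{k²/4}`. -/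
def gaussWeight (q : ℝ) (k : ℤ) : ℂ := ((q ^ ((k : ℝ) ^ 2 / 4) : ℝ) : ℂ)

lemma norm_gaussWeight {q : ℝ} (hq0 : 0 < q) (k : ℤ) :
    ‖gaussWeight q k‖ = q ^ ((k : ℝ) ^ 2 / 4) := by
  rw [gaussWeight, Complex.norm_real, Real.norm_of_nonneg (Real.rpow_nonneg hq0.le _)]

lemma gaussWeight_mul_pow_eq {q : ℝ} (hq0 : 0 < q) {k l : ℤ} {m n : ℕ}
    (h : k ^ 2 + 4 * m = l ^ 2 + 4 * n) :
    gaussWeight q k * (q : ℂ) ^ m = gaussWeight q l * (q : ℂ) ^ n := by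
  simp only [gaussWeight, ← Complex.ofReal_pow, ← Complex.ofReal_mul]
  rw [← Real.rpow_natCast q m, ← Real.rpow_natCast q n, ← Real.rpow_add hq0, ← Real.rpow_add hq0]
  have h' : (k : ℝ) ^ 2 + 4 * m = (l : ℝ) ^ 2 + 4 * n := by exact_mod_cast h
  congr 2
  linarith

lemma gaussWeight_neg (q : ℝ) (k : ℤ) : gaussWeight q (-k) = gaussWeight q k := by
  simp [gaussWeight]

lemma gaussWeight_sub {q : ℝ} (hq0 : 0 < q) (m : ℕ) (n : ℤ) :
    gaussWeight q (m - n) =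
      gaussWeight q n * (gaussWeight q m * ((q ^ (-(n : ℝ) / 2) : ℝ) : ℂ) ^ m) := by
  simp only [gaussWeight, ← Complex.ofReal_pow, ← Complex.ofReal_mul]
  rw [← Real.rpow_mul_natCast hq0.le, ← Real.rpow_add hq0, ← Real.rpow_add hq0]
  congr 2
  push_cast
  ring

lemma summable_rpow_sq_mul_pow {q : ℝ} (hq0 : 0 < q) (hq1 : q < 1) {R : ℝ} (hR : 0 ≤ R) :
    Summable fun n : ℕ => q ^ ((n : ℝ) ^ 2 / 4) * R ^ n := by
  rcases hR.eq_or_lt with rfl | hR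
  · exact summable_of_ne_finset_zero (s := {0}) fun n hn => by
      simp [zero_pow (show n ≠ 0 by simpa using hn)]
  refine summable_of_ratio_test_tendsto_lt_one (l := 0) zero_lt_one
    (Eventually.of_forall fun n => by positivity) ?_
  have hr : ∀ n : ℕ, q ^ (1 / 4 : ℝ) * R * (q ^ (1 / 2 : ℝ)) ^ n =
      ‖q ^ (((n + 1 : ℕ) : ℝ) ^ 2 / 4) * R ^ (n + 1)‖ / ‖q ^ ((n : ℝ) ^ 2 / 4) * R ^ n‖ := by
    intro n
    rw [Real.norm_of_nonneg (by positivity), Real.norm_of_nonneg (by positivity),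
      eq_div_iff (by positivity), ← Real.rpow_mul_natCast hq0.le]
    have : (((n + 1 : ℕ) : ℝ) ^ 2 / 4) = 1 / 4 + 1 / 2 * n + (n : ℝ) ^ 2 / 4 := by
      push_cast
      ring
    rw [this, Real.rpow_add hq0, Real.rpow_add hq0]
    ring
  refine Tendsto.congr hr ?_
  simpa using (tendsto_pow_atTop_nhds_zero_of_lt_one (Real.rpow_nonneg hq0.le _)
    (Real.rpow_lt_one hq0.le hq1 (by norm_num : (0 : ℝ) < 1 / 2))).const_mul (q ^ (1 / 4 : ℝ) * R)

lemma summable_norm_gaussWeight_mul_pow_mul_qHermite {q : ℝ} (hq0 : 0 < q) (hq1 : q < 1)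
    (X x y : ℂ) : Summable fun n : ℕ => ‖gaussWeight q n * X ^ n * qHermite q x y n‖ := by
  have hq : ‖(q : ℂ)‖ < 1 := by rwa [Complex.norm_of_nonneg hq0.le]
  obtain ⟨B, hB0, hB⟩ := exists_norm_qHermite_le hq x y
  refine (summable_rpow_sq_mul_pow hq0 hq1 (R := ‖X‖ * B) (by positivity)).of_nonneg_of_le
    (fun _ => norm_nonneg _) fun n => ?_
  rw [norm_mul, norm_mul, norm_gaussWeight hq0, norm_pow, mul_pow, ← mul_assoc, Int.cast_natCast]
  gcongr
  exact hB n

lemma summable_gaussWeight_sub_mul_qHermite {q : ℝ} (hq0 : 0 < q) (hq1 : q < 1) (x y : ℂ) (n : ℤ) :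
    Summable fun m : ℕ => gaussWeight q (m - n) * qHermite q x y m := by
  refine ((summable_norm_gaussWeight_mul_pow_mul_qHermite hq0 hq1
    ((q ^ (-(n : ℝ) / 2) : ℝ) : ℂ) x y).of_norm.mul_left (gaussWeight q n)).congr fun m => ?_
  rw [gaussWeight_sub hq0]
  ring

lemma summable_norm_theta {q : ℝ} (hq0 : 0 < q) (hq1 : q < 1) (X : ℂ) :
    Summable fun k : ℤ => ‖gaussWeight q k * X ^ k‖ := by
  refine Summable.of_nat_of_neg
    ((summable_rpow_sq_mul_pow hq0 hq1 (norm_nonneg X)).congr fun n => ?_)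
    ((summable_rpow_sq_mul_pow hq0 hq1 (norm_nonneg X⁻¹)).congr fun n => ?_)
  · rw [norm_mul, norm_gaussWeight hq0, zpow_natCast, norm_pow, Int.cast_natCast]
  · rw [gaussWeight_neg, norm_mul, norm_gaussWeight hq0, zpow_neg, zpow_natCast, ← inv_pow,
      norm_pow, Int.cast_natCast]

/-- A pair of naturals is determined by its difference and its minimum. -/
def intProdNatEquiv : ℤ × ℕ ≃ ℕ × ℕ where
  toFun p := (p.2 + p.1.toNat, p.2 + (-p.1).toNat)
  invFun p := ((p.1 : ℤ) - p.2, min p.1 p.2)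
  left_inv := by
    rintro ⟨k, c⟩
    ext
    · simp
    · simp
      omega
  right_inv := by
    rintro ⟨a, b⟩
    ext <;> (simp; omega)

/-- The summand of the double series for `∑ q^{n²/4} qHermite n`. -/
def doubleTerm (q : ℝ) (X : ℂ) (p : ℕ × ℕ) : ℂ :=
  gaussWeight q ((p.1 + p.2 : ℕ) : ℤ) *
    (X ^ p.1 * X⁻¹ ^ p.2 * (qFactor q p.1)⁻¹ * (qFactor q p.2)⁻¹)

lemma doubleTerm_intProdNatEquiv {q : ℝ} (hq0 : 0 < q) {X : ℂ} (hX : X ≠ 0) (k : ℤ) (c : ℕ) :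
    doubleTerm q X (intProdNatEquiv (k, c)) =
      gaussWeight q k * X ^ k * cauchyTerm q k.natAbs c := by
  have hXc : X ^ c * X⁻¹ ^ c = 1 := by rw [← mul_pow, mul_inv_cancel₀ hX, one_pow]
  obtain ⟨d, rfl | rfl⟩ := k.eq_nat_or_neg
  · have hg := gaussWeight_mul_pow_eq hq0 (k := ((c + d + c : ℕ) : ℤ)) (l := d) (m := 0)
      (n := c * (c + d)) (by push_cast; ring)
    simp only [pow_zero, mul_one] at hg
    simp only [doubleTerm, intProdNatEquiv, Equiv.coe_fn_mk, Int.toNat_natCast,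
      Int.toNat_neg_natCast, add_zero, hg, cauchyTerm, Int.natAbs_natCast, zpow_natCast, pow_add]
    linear_combination (gaussWeight q d * (q : ℂ) ^ (c * (c + d)) * X ^ d * (qFactor q c)⁻¹ *
      (qFactor q (c + d))⁻¹) * hXc
  · have hg := gaussWeight_mul_pow_eq hq0 (k := ((c + (c + d) : ℕ) : ℤ)) (l := d) (m := 0)
      (n := c * (c + d)) (by push_cast; ring)
    simp only [pow_zero, mul_one] at hg
    simp only [doubleTerm, intProdNatEquiv, Equiv.coe_fn_mk, Int.toNat_natCast, neg_neg,
      Int.toNat_neg_natCast, add_zero, hg, cauchyTerm, Int.natAbs_natCast, Int.natAbs_neg,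
      zpow_natCast, zpow_neg, gaussWeight_neg, pow_add, ← inv_pow]
    linear_combination (gaussWeight q d * (q : ℂ) ^ (c * (c + d)) * X⁻¹ ^ d * (qFactor q c)⁻¹ *
      (qFactor q (c + d))⁻¹) * hXc

lemma summable_gaussWeight_mul_cauchyTerm {q : ℝ} (hq0 : 0 < q) (hq1 : q < 1) (X : ℂ) :
    Summable fun p : ℤ × ℕ => gaussWeight q p.1 * X ^ p.1 * cauchyTerm q p.1.natAbs p.2 := by
  have hq : ‖(q : ℂ)‖ < 1 := by rwa [Complex.norm_of_nonneg hq0.le]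
  obtain ⟨C, hC⟩ := exists_norm_qFactor_inv_le hq
  have hC0 : 0 ≤ C := (norm_nonneg _).trans (hC 0)
  refine ((summable_norm_theta hq0 hq1 X).mul_of_nonneg
    ((summable_geometric_of_lt_one (norm_nonneg _) hq).mul_left (C * C))
    (fun _ => norm_nonneg _) (fun _ => by positivity)).of_norm_bounded fun p => ?_
  rw [norm_mul]
  gcongr
  exact norm_cauchyTerm_le_geometric hq hC _ _

lemma tsum_gaussWeight_mul_qHermite {q : ℝ} (hq0 : 0 < q) (hq1 : q < 1) {X : ℂ} (hX : X ≠ 0) :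
    ∑' m : ℕ, gaussWeight q m * qHermite q X X⁻¹ m =
      thetaA1 q X * (∏' j : ℕ, (1 - (q : ℂ) ^ (j + 1)))⁻¹ := by
  have hq : ‖(q : ℂ)‖ < 1 := by rwa [Complex.norm_of_nonneg hq0.le]
  have hs := summable_gaussWeight_mul_cauchyTerm hq0 hq1 X
  have hc : (fun p => doubleTerm q X (intProdNatEquiv p)) =
      fun p : ℤ × ℕ => gaussWeight q p.1 * X ^ p.1 * cauchyTerm q p.1.natAbs p.2 :=
    funext fun ⟨k, c⟩ => doubleTerm_intProdNatEquiv hq0 hX k c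
  have hd : Summable (doubleTerm q X) := by
    rw [← intProdNatEquiv.summable_iff, Function.comp_def, hc]
    exact hs
  have h1 : ∑' p, doubleTerm q X p = thetaA1 q X * (∏' j : ℕ, (1 - (q : ℂ) ^ (j + 1)))⁻¹ := by
    rw [← intProdNatEquiv.tsum_eq, hc, hs.tsum_prod]
    simp_rw [tsum_mul_left, tsum_cauchyTerm hq]
    rw [tsum_mul_right]
    rfl
  let e := Finset.HasAntidiagonal.sigmaAntidiagonalEquivProd (A := ℕ)
  have hσ : Summable fun p : Σ n : ℕ, Finset.HasAntidiagonal.antidiagonal n =>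
      doubleTerm q X (e p) := (e.summable_iff (f := doubleTerm q X)).mpr hd
  rw [← h1, ← e.tsum_eq (doubleTerm q X), hσ.tsum_sigma]
  refine tsum_congr fun m => ?_
  rw [tsum_fintype, qHermite, Finset.mul_sum, ← Finset.sum_coe_sort]
  refine Finset.sum_congr rfl fun p _ => ?_
  change _ = doubleTerm q X p.1
  rw [doubleTerm, Finset.HasAntidiagonal.mem_antidiagonal.mp p.2]

lemma gaussSum_recurrence {q : ℝ} (hq0 : 0 < q) (hq1 : q < 1) {x y : ℂ} (hxy : x * y = 1)
    (n : ℕ) :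
    ∑' m : ℕ, gaussWeight q (m - (n + 1)) * qHermite q x y m +
      (1 - (q : ℂ) ^ n) * ∑' m : ℕ, gaussWeight q (m - (n - 1)) * qHermite q x y m =
    (x + y) * ∑' m : ℕ, gaussWeight q (m - n) * qHermite q x y m := by
  have hq : ‖(q : ℂ)‖ < 1 := by rwa [Complex.norm_of_nonneg hq0.le]
  have hs := summable_gaussWeight_sub_mul_qHermite hq0 hq1 x y
  have hw (m : ℕ) : gaussWeight q (m - (n + 1)) * (q : ℂ) ^ m =
      gaussWeight q (m - (n - 1)) * (q : ℂ) ^ n :=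
    gaussWeight_mul_pow_eq hq0 (by ring)
  set f : ℕ → ℂ := fun m => gaussWeight q (m - (n + 1)) * (1 - (q : ℂ) ^ m) * qHermite q x y m
    with hf
  set g : ℕ → ℂ := fun m => gaussWeight q (m - n) * qHermitePred q x y m with hg
  have hf' (m : ℕ) : f m = gaussWeight q (m - (n + 1)) * qHermite q x y m -
      (q : ℂ) ^ n * (gaussWeight q (m - (n - 1)) * qHermite q x y m) := by
    linear_combination -qHermite q x y m * hw m
  have hfs : Summable f :=
    ((hs (n + 1)).sub ((hs (n - 1)).mul_left ((q : ℂ) ^ n))).congr fun m => (hf' m).symm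
  have hg' (m : ℕ) : g (m + 1) = gaussWeight q (m - (n - 1)) * qHermite q x y m := by
    simp only [hg, qHermitePred]
    congr 2
    push_cast
    ring
  have hgs : Summable g :=
    (summable_nat_add_iff 1).mp ((hs (n - 1)).congr fun m => (hg' m).symm)
  have hfsum := hfs.tsum_eq_zero_add
  have hgsum := hgs.tsum_eq_zero_add
  have hf0 : f 0 = 0 := by simp [hf]
  have hg0 : g 0 = 0 := by simp [hg, qHermitePred]
  rw [hf0, zero_add, tsum_congr hf', (hs (n + 1)).tsum_sub ((hs (n - 1)).mul_left _),
    tsum_mul_left] at hfsum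
  rw [hg0, zero_add, tsum_congr hg'] at hgsum
  have hfin : ∑' m, f (m + 1) + ∑' m, g m =
      (x + y) * ∑' m : ℕ, gaussWeight q (m - n) * qHermite q x y m := by
    rw [← ((summable_nat_add_iff 1).mpr hfs).tsum_add hgs, ← tsum_mul_left]
    refine tsum_congr fun m => ?_
    have hr := qHermite_recurrence hq x y m
    simp only [hf, hg]
    rw [show ((m + 1 : ℕ) : ℤ) - (n + 1) = m - n by push_cast; ring]
    linear_combination gaussWeight q (m - n) * hr +
      gaussWeight q (m - n) * qHermitePred q x y m * (-hxy)
  rw [← hfin, ← hfsum, hgsum]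
  ring

lemma qFactor_mul_qHermite_recurrence {q : ℂ} (hq : ‖q‖ < 1) {x y : ℂ} (hxy : x * y = 1) (n : ℕ) :
    qFactor q (n + 2) * qHermite q x y (n + 2) =
      (x + y) * (qFactor q (n + 1) * qHermite q x y (n + 1)) -
        (1 - q ^ (n + 1)) * (qFactor q n * qHermite q x y n) := by
  have h := qHermite_recurrence hq x y (n + 1)
  rw [qHermitePred, hxy] at h
  rw [qFactor_succ q (n + 1), qFactor_succ q n]
  linear_combination qFactor q n * (1 - q ^ (n + 1)) * h

lemma tsum_gaussWeight_sub_mul_qHermite {q : ℝ} (hq0 : 0 < q) (hq1 : q < 1) {X : ℂ} (hX : X ≠ 0)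
    (n : ℕ) :
    ∑' m : ℕ, gaussWeight q (m - n) * qHermite q X X⁻¹ m =
      thetaA1 q X * (∏' j : ℕ, (1 - (q : ℂ) ^ (j + 1)))⁻¹ *
        (qFactor q n * qHermite q X X⁻¹ n) := by
  have hq : ‖(q : ℂ)‖ < 1 := by rwa [Complex.norm_of_nonneg hq0.le]
  have hXX := mul_inv_cancel₀ hX
  have h0 := tsum_gaussWeight_mul_qHermite hq0 hq1 hX
  induction n using Nat.twoStepInduction with
  | zero => simpa [qHermite] using h0
  | one =>
    have hr := gaussSum_recurrence hq0 hq1 hXX 0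
    have h1 := qHermite_recurrence hq X X⁻¹ 0
    simp only [Nat.cast_zero, zero_add, sub_zero, pow_zero, sub_self, zero_mul, add_zero, h0,
      pow_one] at hr h1
    rw [Nat.cast_one, hr, qFactor_succ, qFactor_zero, zero_add, pow_one, one_mul, h1]
    simp [qHermite, qHermitePred]
    ring
  | more n ih1 ih2 =>
    have hr := gaussSum_recurrence hq0 hq1 hXX (n + 1)
    rw [qFactor_mul_qHermite_recurrence hq hXX]
    push_cast at hr ih2 ⊢
    rw [ih2, show (n : ℤ) + 1 - 1 = n by ring, ih1, show (n : ℤ) + 1 + 1 = n + 2 by ring] at hr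
    linear_combination hr

lemma whitA1_eq_tsum_qHermite {q : ℝ} (hq : ‖(q : ℂ)‖ < 1) (X : ℂ) {Λ : ℂ} (hΛ : Λ ≠ 0) :
    whitA1 q X Λ = ∑' n : ℕ, gaussWeight q n * X ^ n * qHermite q Λ Λ⁻¹ n := by
  refine tsum_congr fun n => ?_
  have h0 := qFactor_ne_zero hq n
  rw [PbarA1_eq_qHermite hq n hΛ, gaussWeight, Int.cast_natCast]
  change _ / qFactor q n = _
  field_simp

lemma fourier_jackson_term {q : ℝ} (hq0 : 0 < q) (hq1 : q < 1) (Λ : ℂ) {Λ' : ℂ} (hΛ' : Λ' ≠ 0)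
    (n : ℕ) :
    ((q ^ ((n : ℝ) ^ 2 / 2) : ℝ) : ℂ) * Λ ^ n *
        whitA1 q (((q ^ (-(n : ℝ) / 2) : ℝ) : ℂ)) Λ' /
        ∏ j ∈ Finset.Icc 1 n, (1 - (q : ℂ) ^ j) =
      thetaA1 q Λ' * (∏' j : ℕ, (1 - (q : ℂ) ^ (j + 1)))⁻¹ *
        (gaussWeight q n * Λ ^ n * qHermite q Λ' Λ'⁻¹ n) := by
  have hq : ‖(q : ℂ)‖ < 1 := by rwa [Complex.norm_of_nonneg hq0.le]
  have h0 := qFactor_ne_zero hq n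
  have hsq : ((q ^ ((n : ℝ) ^ 2 / 2) : ℝ) : ℂ) = gaussWeight q n * gaussWeight q n := by
    simp only [gaussWeight, ← Complex.ofReal_mul]
    rw [← Real.rpow_add hq0]
    congr 2
    push_cast
    ring
  have hS := tsum_gaussWeight_sub_mul_qHermite hq0 hq1 hΛ' n
  have hW : ∑' m : ℕ, gaussWeight q (m - n) * qHermite q Λ' Λ'⁻¹ m =
      gaussWeight q n * whitA1 q (((q ^ (-(n : ℝ) / 2) : ℝ) : ℂ)) Λ' := by
    rw [whitA1_eq_tsum_qHermite hq _ hΛ', ← tsum_mul_left]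
    refine tsum_congr fun m => ?_
    rw [gaussWeight_sub hq0, Int.cast_natCast]
    ring
  change _ / qFactor q n = _
  rw [div_eq_iff h0, hsq]
  linear_combination gaussWeight q n * Λ ^ n * (hS - hW)

/-- the global q-Whittaker function is invariant under the
q-Fourier–Jackson transform. -/
theorem whitA1_fourier_jackson_invariance (q : ℝ) (hq0 : 0 < q) (hq1 : q < 1)
    (Λ Λ' : ℂ) (hΛ : Λ ≠ 0) (hΛ' : Λ' ≠ 0) :
    Summable (fun n : ℕ =>
      ‖((q ^ ((n : ℝ) ^ 2 / 2) : ℝ) : ℂ) * Λ ^ n *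
        whitA1 q (((q ^ (-(n : ℝ) / 2) : ℝ) : ℂ)) Λ' /
        ∏ j ∈ Finset.Icc 1 n, (1 - (q : ℂ) ^ j)‖) ∧
    ∑' n : ℕ, ((q ^ ((n : ℝ) ^ 2 / 2) : ℝ) : ℂ) * Λ ^ n *
        whitA1 q (((q ^ (-(n : ℝ) / 2) : ℝ) : ℂ)) Λ' /
        ∏ j ∈ Finset.Icc 1 n, (1 - (q : ℂ) ^ j) =
      thetaA1 q Λ' * whitA1 q Λ Λ' / ∏' j : ℕ, (1 - (q : ℂ) ^ (j + 1)) := by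
  have hq : ‖(q : ℂ)‖ < 1 := by rwa [Complex.norm_of_nonneg hq0.le]
  simp_rw [fourier_jackson_term hq0 hq1 Λ hΛ']
  constructor
  · simp_rw [norm_mul (thetaA1 q Λ' * _)]
    exact (summable_norm_gaussWeight_mul_pow_mul_qHermite hq0 hq1 Λ Λ' Λ'⁻¹).mul_left _
  · rw [tsum_mul_left, ← whitA1_eq_tsum_qHermite hq Λ hΛ']
    ring

end
end

section
/- Fix a real number q with 0 < q < 1. For every Λ ∈ ℂ with 0 < |Λ| < 1, the global q-Whittaker function of type A₁ satisfies the asymptotic formula lim_{n → ∞} Λⁿ · q^{n²/4} · Ψ̃(q^{−n/2}, Λ) = θ(Λ) · ∏_{j=1}^∞ (1 − qʲ)^{−1} · ∏_{j=0}^∞ (1 − Λ² qʲ)^{−1}. (Theorem 4.2(ii) of the paper, formula (4.70), in the rank-one case.) -/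
open scoped BigOperators
open Filter

noncomputable section

/-- The finite `q`-Pochhammer symbol `(q; q)_n`. -/
def qPoch (q : ℂ) (n : ℕ) : ℂ := ∏ i ∈ Finset.range n, (1 - q ^ (i + 1))

lemma one_sub_ne_zero_of_norm_lt_one {z : ℂ} (hz : ‖z‖ < 1) : 1 - z ≠ 0 := by
  intro h
  rw [← sub_eq_zero.mp h] at hz
  simp at hz

lemma norm_pow_succ_lt_one {q : ℂ} (hq : ‖q‖ < 1) (i : ℕ) : ‖q ^ (i + 1)‖ < 1 := by
  rw [norm_pow]
  exact pow_lt_one₀ (norm_nonneg _) hq (Nat.succ_ne_zero i)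

lemma qPoch_ne_zero {q : ℂ} (hq : ‖q‖ < 1) (n : ℕ) : qPoch q n ≠ 0 :=
  Finset.prod_ne_zero_iff.mpr fun i _ =>
    one_sub_ne_zero_of_norm_lt_one (norm_pow_succ_lt_one hq i)

lemma multipliable_inv_one_sub_mul_pow {q z : ℂ} (hq : ‖q‖ < 1) (hz : ‖z‖ < 1) :
    Multipliable fun j : ℕ => (1 - z * q ^ j)⁻¹ := by
  have hlt : ∀ j : ℕ, ‖z * q ^ j‖ ≤ ‖z‖ := fun j => by
    rw [norm_mul, norm_pow]
    exact mul_le_of_le_one_right (norm_nonneg _) (pow_le_one₀ (norm_nonneg _) hq.le)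
  have hne : ∀ j : ℕ, 1 - z * q ^ j ≠ 0 := fun j =>
    one_sub_ne_zero_of_norm_lt_one ((hlt j).trans_lt hz)
  have heq : (fun j : ℕ => (1 - z * q ^ j)⁻¹) =
      fun j => 1 + z * q ^ j * (1 - z * q ^ j)⁻¹ := by
    funext j
    field_simp [hne j]
    ring
  rw [heq]
  refine Complex.multipliable_one_add_of_summable ?_
  have hs : Summable fun j : ℕ => ‖q‖ ^ j * (‖z‖ * (1 - ‖z‖)⁻¹) :=
    (summable_geometric_of_lt_one (norm_nonneg _) hq).mul_right _
  refine hs.of_norm_bounded fun j => ?_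
  have h1 : 1 - ‖z‖ ≤ ‖1 - z * q ^ j‖ := by
    have := norm_sub_norm_le (1 : ℂ) (z * q ^ j)
    rw [norm_one] at this
    linarith [hlt j]
  have h2 : ‖1 - z * q ^ j‖⁻¹ ≤ (1 - ‖z‖)⁻¹ := inv_anti₀ (by linarith) h1
  rw [norm_mul, norm_mul, norm_pow, norm_inv]
  calc ‖z‖ * ‖q‖ ^ j * ‖1 - z * q ^ j‖⁻¹ ≤ ‖z‖ * ‖q‖ ^ j * (1 - ‖z‖)⁻¹ := by gcongr
    _ = _ := by ring

lemma tendsto_inv_qPoch {q : ℂ} (hq : ‖q‖ < 1) :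
    Tendsto (fun n => (qPoch q n)⁻¹) atTop (nhds (∏' j : ℕ, (1 - q ^ (j + 1))⁻¹)) := by
  have h := (multipliable_inv_one_sub_mul_pow hq hq).tendsto_prod_tprod_nat
  simpa only [qPoch, ← Finset.prod_inv_distrib, pow_succ'] using h

lemma exists_norm_inv_qPoch_le {q : ℂ} (hq : ‖q‖ < 1) :
    ∃ C : ℝ, 0 ≤ C ∧ ∀ n, ‖(qPoch q n)⁻¹‖ ≤ C := by
  obtain ⟨C, hC⟩ := (Metric.isBounded_range_of_tendsto _ (tendsto_inv_qPoch hq)).exists_norm_le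
  exact ⟨C, (norm_nonneg _).trans (hC _ ⟨0, rfl⟩), fun n => hC _ ⟨n, rfl⟩⟩

lemma summable_pow_mul_inv_qPoch {q z : ℂ} (hq : ‖q‖ < 1) (hz : ‖z‖ < 1) :
    Summable fun l : ℕ => z ^ l * (qPoch q l)⁻¹ := by
  obtain ⟨C, hC0, hC⟩ := exists_norm_inv_qPoch_le hq
  refine ((summable_geometric_of_lt_one (norm_nonneg z) hz).mul_right C).of_norm_bounded
    fun l => ?_
  rw [norm_mul, norm_pow]
  gcongr
  exact hC l

lemma one_sub_mul_tsum_pow_mul_inv_qPoch {q z : ℂ} (hq : ‖q‖ < 1) (hz : ‖z‖ < 1) :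
    (1 - z) * ∑' l : ℕ, z ^ l * (qPoch q l)⁻¹ = ∑' l : ℕ, (z * q) ^ l * (qPoch q l)⁻¹ := by
  have hzq : ‖z * q‖ < 1 := by
    rw [norm_mul]
    exact mul_lt_one_of_nonneg_of_lt_one_left (norm_nonneg _) hz hq.le
  have h1 := summable_pow_mul_inv_qPoch hq hz
  have h2 := summable_pow_mul_inv_qPoch hq hzq
  have hsub : ∑' l : ℕ, (z ^ l * (qPoch q l)⁻¹ - (z * q) ^ l * (qPoch q l)⁻¹) =
      z * ∑' l : ℕ, z ^ l * (qPoch q l)⁻¹ := by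
    rw [(h1.sub h2).tsum_eq_zero_add, ← tsum_mul_left]
    simp only [pow_zero, sub_self, zero_add]
    refine tsum_congr fun l => ?_
    have hl : 1 - q ^ (l + 1) ≠ 0 :=
      one_sub_ne_zero_of_norm_lt_one (norm_pow_succ_lt_one hq l)
    have hp := qPoch_ne_zero hq l
    have hs : qPoch q (l + 1) = qPoch q l * (1 - q ^ (l + 1)) := Finset.prod_range_succ _ _
    rw [hs, mul_pow]
    field_simp
    ring
  rw [h1.tsum_sub h2] at hsub
  linear_combination hsub

/-- Euler's identity `∑ zˡ / (q; q)_l = 1 / (z; q)_∞`. -/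
lemma tsum_pow_mul_inv_qPoch {q z : ℂ} (hq : ‖q‖ < 1) (hz : ‖z‖ < 1) :
    ∑' l : ℕ, z ^ l * (qPoch q l)⁻¹ = ∏' j : ℕ, (1 - z * q ^ j)⁻¹ := by
  have hlt : ∀ j : ℕ, ‖z * q ^ j‖ ≤ ‖z‖ := fun j => by
    rw [norm_mul, norm_pow]
    exact mul_le_of_le_one_right (norm_nonneg _) (pow_le_one₀ (norm_nonneg _) hq.le)
  have hiter : ∀ n : ℕ, (∏ j ∈ Finset.range n, (1 - z * q ^ j)⁻¹) *
      (∑' l : ℕ, (z * q ^ n) ^ l * (qPoch q l)⁻¹) = ∑' l : ℕ, z ^ l * (qPoch q l)⁻¹ := by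
    intro n
    induction n with
    | zero => simp
    | succ n ih =>
      have hn := (hlt n).trans_lt hz
      have hne := one_sub_ne_zero_of_norm_lt_one hn
      rw [← ih, Finset.prod_range_succ, pow_succ, ← mul_assoc z,
        ← one_sub_mul_tsum_pow_mul_inv_qPoch hq hn]
      field_simp
  obtain ⟨C, hC0, hC⟩ := exists_norm_inv_qPoch_le hq
  have hlim : Tendsto (fun n : ℕ => ∑' l : ℕ, (z * q ^ n) ^ l * (qPoch q l)⁻¹) atTop
      (nhds (∑' l : ℕ, (0 : ℂ) ^ l * (qPoch q l)⁻¹)) := by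
    refine tendsto_tsum_of_dominated_convergence
      ((summable_geometric_of_lt_one (norm_nonneg z) hz).mul_right C) (fun l => ?_)
      (Eventually.of_forall fun n l => ?_)
    · have h := (tendsto_pow_atTop_nhds_zero_of_norm_lt_one hq).const_mul z
      rw [mul_zero] at h
      exact (h.pow l).mul_const _
    · rw [norm_mul, norm_pow]
      gcongr
      · exact hlt n
      · exact hC l
  have hzero : ∑' l : ℕ, (0 : ℂ) ^ l * (qPoch q l)⁻¹ = 1 := by
    rw [tsum_eq_single 0 fun l hl => by simp [hl]]
    simp [qPoch]
  rw [hzero] at hlim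
  have h := (multipliable_inv_one_sub_mul_pow hq hz).tendsto_prod_tprod_nat.mul hlim
  simp only [hiter, mul_one] at h
  exact tendsto_nhds_unique tendsto_const_nhds h

lemma sum_range_succ_eq_sum_pairs (m : ℕ) (f : ℕ → ℂ) :
    ∑ l ∈ Finset.range (m + 1), f l =
      ∑ j ∈ Finset.range (m / 2 + 1), if m - 2 * j = 0 then f j else f j + f (m - j) := by
  induction m using Nat.twoStepInduction generalizing f with
  | zero => simp
  | one => simp [Finset.sum_range_succ]
  | more m ih _ =>
    rw [Finset.sum_range_succ, Finset.sum_range_succ', ih (fun l => f (l + 1)),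
      show (m + 2) / 2 + 1 = m / 2 + 1 + 1 by omega, Finset.sum_range_succ' _ (m / 2 + 1)]
    have hcongr : ∑ j ∈ Finset.range (m / 2 + 1),
        (if m - 2 * j = 0 then f (j + 1) else f (j + 1) + f (m - j + 1)) =
        ∑ j ∈ Finset.range (m / 2 + 1), if m + 2 - 2 * (j + 1) = 0 then f (j + 1)
          else f (j + 1) + f (m + 2 - (j + 1)) := by
      refine Finset.sum_congr rfl fun j hj => ?_
      have hj' := Finset.mem_range.mp hj
      rw [show m + 2 - 2 * (j + 1) = m - 2 * j by omega,
        show m + 2 - (j + 1) = m - j + 1 by omega]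
    rw [hcongr]
    simp
    ring

lemma prod_range_one_sub_pow_sub_mul_qPoch (q : ℂ) {m j : ℕ} (hj : j ≤ m) :
    (∏ i ∈ Finset.range j, (1 - q ^ (m - i))) * qPoch q (m - j) = qPoch q m := by
  induction j with
  | zero => simp
  | succ j ih =>
    rw [← ih (by omega), Finset.prod_range_succ, show m - j = m - (j + 1) + 1 by omega,
      show qPoch q (m - (j + 1) + 1) = qPoch q (m - (j + 1)) * (1 - q ^ (m - (j + 1) + 1)) from
        Finset.prod_range_succ _ _]
    ring

lemma pow_mul_PbarA1_div_qPoch {q : ℝ} (hq : ‖(q : ℂ)‖ < 1) {Λ : ℂ} (hΛ : Λ ≠ 0) (m : ℕ) :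
    Λ ^ m * PbarA1 q m Λ / qPoch q m =
      ∑ l ∈ Finset.range (m + 1), (Λ ^ 2) ^ l * (qPoch q l)⁻¹ * (qPoch q (m - l))⁻¹ := by
  have hP : PbarA1 q m Λ = ∑ j ∈ Finset.range (m / 2 + 1),
      (∏ i ∈ Finset.range j, (1 - (q : ℂ) ^ (m - i)) / (1 - (q : ℂ) ^ (i + 1))) *
        Msym (m - 2 * j) Λ := by
    rw [PbarA1, Finset.range_eq_Ico (a := m / 2 + 1), Finset.sum_eq_sum_Ico_succ_bot (Nat.succ_pos _)]
    simp only [Finset.range_zero, Finset.prod_empty, one_mul, mul_zero, Nat.sub_zero, zero_add]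
    rfl
  rw [sum_range_succ_eq_sum_pairs, hP, Finset.mul_sum, Finset.sum_div]
  refine Finset.sum_congr rfl fun j hj => ?_
  have hj' : 2 * j ≤ m := by have := Finset.mem_range.mp hj; omega
  have h1 := qPoch_ne_zero hq j
  have h2 := qPoch_ne_zero hq (m - j)
  have h3 := qPoch_ne_zero hq m
  have hprod : ∏ i ∈ Finset.range j, (1 - (q : ℂ) ^ (m - i)) / (1 - (q : ℂ) ^ (i + 1)) =
      qPoch q m * (qPoch q j)⁻¹ * (qPoch q (m - j))⁻¹ := by
    rw [Finset.prod_div_distrib, ← prod_range_one_sub_pow_sub_mul_qPoch (q : ℂ)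
      (show j ≤ m by omega)]
    change _ / qPoch q j = _
    field_simp
  rw [hprod, Msym]
  split_ifs with h0
  · have : Λ ^ m = (Λ ^ 2) ^ j := by rw [← pow_mul]; congr 1; omega
    rw [this]
    field_simp
  · rw [show m - (m - j) = j by omega]
    have e1 : Λ ^ m * Λ ^ (m - 2 * j) = (Λ ^ 2) ^ (m - j) := by
      rw [← pow_mul, ← pow_add]; congr 1; omega
    have e2 : Λ ^ m * Λ⁻¹ ^ (m - 2 * j) = (Λ ^ 2) ^ j := by
      rw [← pow_mul, inv_pow, ← div_eq_mul_inv, div_eq_iff (pow_ne_zero _ hΛ), ← pow_add]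
      congr 1; omega
    rw [← e1, ← e2]
    field_simp
    ring

lemma tendsto_sum_pow_mul_inv_qPoch {q z : ℂ} (hq : ‖q‖ < 1) (hz : ‖z‖ < 1) :
    Tendsto (fun m : ℕ => ∑ l ∈ Finset.range (m + 1), z ^ l * (qPoch q l)⁻¹ * (qPoch q (m - l))⁻¹)
      atTop (nhds ((∏' j : ℕ, (1 - q ^ (j + 1))⁻¹) * ∏' j : ℕ, (1 - z * q ^ j)⁻¹)) := by
  obtain ⟨C, hC0, hC⟩ := exists_norm_inv_qPoch_le hq
  have hsum : ∀ m : ℕ,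
      ∑ l ∈ Finset.range (m + 1), z ^ l * (qPoch q l)⁻¹ * (qPoch q (m - l))⁻¹ =
      ∑' l : ℕ, if l ∈ Finset.range (m + 1) then
        z ^ l * (qPoch q l)⁻¹ * (qPoch q (m - l))⁻¹ else 0 := fun m => by
    rw [tsum_eq_sum (s := Finset.range (m + 1)) fun l hl => if_neg hl]
    exact Finset.sum_congr rfl fun l hl => (if_pos hl).symm
  simp only [hsum]
  rw [← tsum_pow_mul_inv_qPoch hq hz, ← tsum_mul_left]
  refine tendsto_tsum_of_dominated_convergence
    ((summable_geometric_of_lt_one (norm_nonneg z) hz).mul_right (C * C)) (fun l => ?_)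
    (Eventually.of_forall fun m l => ?_)
  · rw [mul_comm (∏' j : ℕ, _)]
    refine (((tendsto_inv_qPoch hq).comp (tendsto_sub_atTop_nat l)).const_mul _).congr' ?_
    filter_upwards [eventually_ge_atTop l] with m hm
    rw [if_pos (Finset.mem_range.mpr (by omega))]
    rfl
  · split_ifs
    · rw [norm_mul, norm_mul, norm_pow, mul_assoc]
      gcongr
      · exact hC l
      · exact hC (m - l)
    · rw [norm_zero]
      positivity

lemma summable_norm_thetaA1_term {q : ℝ} (hq0 : 0 < q) (hq1 : q < 1) {Λ : ℂ} (hΛ : Λ ≠ 0) :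
    Summable fun j : ℤ => ‖((q ^ ((j : ℝ) ^ 2 / 4) : ℝ) : ℂ) * Λ ^ j‖ := by
  have hlog : Real.log q < 0 := Real.log_neg hq0 hq1
  have him : 0 < (Complex.mk 0 (-Real.log q / (4 * Real.pi))).im :=
    div_pos (by linarith) (by positivity)
  have h := ((summable_jacobiTheta₂_term_iff
    (Complex.mk 0 (-Real.log ‖Λ‖ / (2 * Real.pi))) _).mpr him).norm
  refine h.congr fun j => ?_
  rw [norm_jacobiTheta₂_term, norm_mul, norm_zpow, Complex.norm_real, Real.norm_eq_abs,
    abs_of_pos (Real.rpow_pos_of_pos hq0 _), Real.rpow_def_of_pos hq0, ← Real.rpow_intCast,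
    Real.rpow_def_of_pos (norm_pos_iff.mpr hΛ), ← Real.exp_add]
  congr 1
  have := Real.pi_ne_zero
  field_simp
  ring

/-- `∑_l Λ²ˡ / ((q; q)_l (q; q)_{m - l})`, extended by zero to negative `m`. -/
def hermiteCoeff (q Λ : ℂ) (m : ℤ) : ℂ :=
  if 0 ≤ m then ∑ l ∈ Finset.range (m.toNat + 1),
    (Λ ^ 2) ^ l * (qPoch q l)⁻¹ * (qPoch q (m.toNat - l))⁻¹ else 0

lemma rpow_sq_mul_rpow {q : ℝ} (hq0 : 0 < q) (n m : ℕ) :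
    q ^ ((n : ℝ) ^ 2 / 4) * (q ^ ((m : ℝ) ^ 2 / 4) * (q ^ (-(n : ℝ) / 2)) ^ m) =
      q ^ ((((n : ℤ) - (m : ℤ) : ℤ) : ℝ) ^ 2 / 4) := by
  rw [← Real.rpow_natCast (q ^ (-(n : ℝ) / 2)), ← Real.rpow_mul hq0.le, ← Real.rpow_add hq0,
    ← Real.rpow_add hq0]
  congr 1
  push_cast
  ring

lemma pow_mul_rpow_mul_whitA1 {q : ℝ} (hq0 : 0 < q) (hq1 : q < 1) {Λ : ℂ} (hΛ : Λ ≠ 0) (n : ℕ) :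
    Λ ^ n * ((q ^ ((n : ℝ) ^ 2 / 4) : ℝ) : ℂ) *
        whitA1 q (((q ^ (-(n : ℝ) / 2) : ℝ) : ℂ)) Λ =
      ∑' j : ℤ, ((q ^ ((j : ℝ) ^ 2 / 4) : ℝ) : ℂ) * Λ ^ j * hermiteCoeff q Λ (n - j) := by
  have hq : ‖(q : ℂ)‖ < 1 := by simpa [abs_of_pos hq0] using hq1
  rw [← (Equiv.subLeft (n : ℤ)).tsum_eq fun j : ℤ =>
    ((q ^ ((j : ℝ) ^ 2 / 4) : ℝ) : ℂ) * Λ ^ j * hermiteCoeff q Λ (n - j)]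
  simp only [Equiv.subLeft_apply, sub_sub_cancel]
  rw [← Nat.cast_injective (R := ℤ).tsum_eq, whitA1, ← tsum_mul_left]
  · refine tsum_congr fun m => ?_
    have hden : ∏ j ∈ Finset.Icc 1 m, (1 - (q : ℂ) ^ j) = qPoch q m := by
      rw [qPoch, Finset.range_eq_Ico, Finset.prod_Ico_add' (fun i => 1 - (q : ℂ) ^ i)]
      rfl
    rw [hden, hermiteCoeff, if_pos (Int.natCast_nonneg m), Int.toNat_natCast,
      ← pow_mul_PbarA1_div_qPoch hq hΛ, ← rpow_sq_mul_rpow hq0, zpow_sub₀ hΛ]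
    have := pow_ne_zero m hΛ
    have := qPoch_ne_zero hq m
    push_cast
    simp only [zpow_natCast]
    field_simp
  · intro m hm
    rw [Function.mem_support] at hm
    by_contra hmem
    refine hm ?_
    rw [hermiteCoeff, if_neg, mul_zero]
    exact fun h => hmem ⟨m.toNat, Int.toNat_of_nonneg h⟩

lemma exists_norm_hermiteCoeff_le {q Λ : ℂ} (hq : ‖q‖ < 1) (hΛ : ‖Λ ^ 2‖ < 1) :
    ∃ C : ℝ, ∀ m, ‖hermiteCoeff q Λ m‖ ≤ C := by
  obtain ⟨C, hC⟩ :=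
    (Metric.isBounded_range_of_tendsto _ (tendsto_sum_pow_mul_inv_qPoch hq hΛ)).exists_norm_le
  refine ⟨C, fun m => ?_⟩
  rw [hermiteCoeff]
  split_ifs
  · exact hC _ ⟨m.toNat, rfl⟩
  · rw [norm_zero]
    exact (norm_nonneg _).trans (hC _ ⟨0, rfl⟩)

lemma tendsto_hermiteCoeff {q Λ : ℂ} (hq : ‖q‖ < 1) (hΛ : ‖Λ ^ 2‖ < 1) :
    Tendsto (hermiteCoeff q Λ) atTop
      (nhds ((∏' j : ℕ, (1 - q ^ (j + 1))⁻¹) * ∏' j : ℕ, (1 - Λ ^ 2 * q ^ j)⁻¹)) := by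
  have htoNat : Tendsto Int.toNat atTop atTop :=
    tendsto_atTop.mpr fun b => by
      filter_upwards [eventually_ge_atTop (b : ℤ)] with m hm
      omega
  refine ((tendsto_sum_pow_mul_inv_qPoch hq hΛ).comp htoNat).congr' ?_
  filter_upwards [eventually_ge_atTop (0 : ℤ)] with m hm
  rw [hermiteCoeff, if_pos hm]
  rfl

/-- asymptotic formula for the global q-Whittaker function of type A₁. -/
theorem whitA1_asymptotic_formula (q : ℝ) (hq0 : 0 < q) (hq1 : q < 1)
    (Λ : ℂ) (hΛ0 : Λ ≠ 0) (hΛ1 : ‖Λ‖ < 1) :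
    Filter.Tendsto (fun n : ℕ =>
        Λ ^ n * ((q ^ ((n : ℝ) ^ 2 / 4) : ℝ) : ℂ) *
          whitA1 q (((q ^ (-(n : ℝ) / 2) : ℝ) : ℂ)) Λ)
      Filter.atTop
      (nhds (thetaA1 q Λ * (∏' j : ℕ, (1 - (q : ℂ) ^ (j + 1))⁻¹) *
        ∏' j : ℕ, (1 - Λ ^ 2 * (q : ℂ) ^ j)⁻¹)) := by
  have hq : ‖(q : ℂ)‖ < 1 := by simpa [abs_of_pos hq0] using hq1
  have hΛ2 : ‖Λ ^ 2‖ < 1 := norm_pow_succ_lt_one hΛ1 1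
  obtain ⟨C, hC⟩ := exists_norm_hermiteCoeff_le hq hΛ2
  simp only [pow_mul_rpow_mul_whitA1 hq0 hq1 hΛ0]
  rw [mul_assoc, thetaA1, ← tsum_mul_right]
  refine tendsto_tsum_of_dominated_convergence
    ((summable_norm_thetaA1_term hq0 hq1 hΛ0).mul_right C) (fun j => ?_)
    (Eventually.of_forall fun n j => ?_)
  · exact ((tendsto_hermiteCoeff hq hΛ2).comp
      (tendsto_atTop_add_const_right _ (-j) tendsto_natCast_atTop_atTop)).const_mul _
  · rw [norm_mul]
    gcongr
    exact hC _

end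
end
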